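/- arXiv:2508.03867 — 3 statements merged into one kernel-verified Lean document; each statement's English description precedes it below -/
import Mathlib

section
/- Let r = min_{1 ≤ ℓ ≤ L−1} Σ_i A^ℓ_i and let X ∈ ℝ^{n_0×m} be a dataset whose columns x^(1),…,x^(m) are in general position (every set of min{n_0,m} columns is linearly independent). Let I ⊆ ℂ[y_{kj} : k ∈ [n_L], j ∈ [m]] be the vanishing ideal of the image of θ ↦ M_A(θ)·X. (i) If m ≤ n_0, then I is the ideal generated by all (r+1)×(r+1) minors of the generic matrix Y = (y_{kj}). (ii) If m > n_0, write the unique relations x^(i) = Σ_{j=m−n_0+1}^{m} λ_{ij} x^(j) for i ∈ [m−n_0]; then I is generated by the n_L(m−n_0) linear forms y_{ki} − Σ_{j=m−n_0+1}^{m} λ_{ij} y_{kj} (for k ∈ [n_L], i ∈ [m−n_0]) together with all (r+1)×(r+1) minors of the submatrix of Y formed by its last n_0 columns. -/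
/-!
The masked matrices are exactly the products `U * V` with inner dimension `r`: the narrowest layer
bounds the rank, and conversely every layer has `r` active neurons through which `V` can be routed
unchanged up to the last weight matrix. A set of linearly independent columns of `X` has a left
inverse, so on those columns `M_A(θ) * X` again takes every value `U * V`. When `m > n 0` the linear
forms eliminate the remaining columns. What remains is the second fundamental theorem for `GL_r`:
a polynomial in the entries of a generic matrix that vanishes on all real products `U * V` lies in
the ideal of `(r + 1)`-minors (`DetIdeal.mem_minorIdeal`).

This is proved by a Gröbner-type argument based on the weight `∑ M_{ij} (i+1)(j+1)` of a monomial
`y^M`. By the rearrangement inequality the diagonal term of a minor is the unique term of maximal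
weight, so modulo the minors every polynomial reduces to one whose monomials contain no strictly
increasing chain of `r + 1` cells (`exists_reduced`). Such chain-free monomials have linearly
independent images under `y_{ij} ↦ ∑ₖ u_{ik} v_{kj}` (`eq_zero_of_mulHom`). Indeed, the cells of a
chain-free `M` can be coloured with `r` colours so that no colour class contains an increasing pair
(`exists_colour`), and the colouring singles out a monomial `w` in the `u`, `v`. If the image of
`y^N` contains `w`, then `N` has in each colour the same row and column contents as `M`; as `M`
is antitone in each colour, all its quadrant counts are at most those of `N` (`quad_le`). So
`weight M ≤ weight N`, with equality only for `N = M`, and in a linear relation the term of maximal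
weight cannot cancel.
-/

noncomputable section

def maskMat (n : ℕ → ℕ) (A : (ℓ : ℕ) → Fin (n ℓ) → Bool) (ℓ : ℕ) :
    Matrix (Fin (n ℓ)) (Fin (n ℓ)) ℝ :=
  Matrix.diagonal (fun i => if A ℓ i then (1 : ℝ) else 0)

def preM (n : ℕ → ℕ) (A : (ℓ : ℕ) → Fin (n ℓ) → Bool)
    (W : (ℓ : ℕ) → Matrix (Fin (n (ℓ + 1))) (Fin (n ℓ)) ℝ) :
    (ℓ : ℕ) → Matrix (Fin (n ℓ)) (Fin (n 0)) ℝ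
  | 0 => 1
  | ℓ + 1 => maskMat n A (ℓ + 1) * (W ℓ * preM n A W ℓ)

/-- The masked matrix `M_A(θ)` of an `L`-layer ReLU network without biases. -/
def maskedMatrix (n : ℕ → ℕ) (A : (ℓ : ℕ) → Fin (n ℓ) → Bool)
    (W : (ℓ : ℕ) → Matrix (Fin (n (ℓ + 1))) (Fin (n ℓ)) ℝ) :
    (L : ℕ) → Matrix (Fin (n L)) (Fin (n 0)) ℝ
  | 0 => 1
  | L + 1 => W L * preM n A W L

/-- The number of active neurons `Σ_i A^ℓ_i` at layer `ℓ`. -/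
def activeCard (n : ℕ → ℕ) (A : (ℓ : ℕ) → Fin (n ℓ) → Bool) (ℓ : ℕ) : ℕ :=
  (Finset.univ.filter fun i : Fin (n ℓ) => A ℓ i = true).card

/-- The vanishing ideal, inside `ℂ[y_i : i ∈ σ]`, of a set of real points:
all complex polynomials vanishing at every real point of `S`. -/
def vanishingIdeal {σ : Type*} (S : Set (σ → ℝ)) : Ideal (MvPolynomial σ ℂ) where
  carrier := {f | ∀ y ∈ S, MvPolynomial.eval (fun i => (y i : ℂ)) f = 0}
  add_mem' := by
    intro a b ha hb y hy
    simp [map_add, ha y hy, hb y hy]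
  zero_mem' := by intro y hy; simp
  smul_mem' := by
    intro c f hf y hy
    simp [smul_eq_mul, map_mul, hf y hy]

namespace DetIdeal
open MvPolynomial Finset

/-! ### Images of monomials under matrix multiplication -/

/-- Exponent of `u_{ik} v_{kj}`, where `x = (i, j)`. The variables `u` are indexed by the left
summand, the variables `v` by the right one. -/
def bigExp {p q r : ℕ} (x : Fin p × Fin q) (k : Fin r) :
    (Fin p × Fin r) ⊕ (Fin r × Fin q) →₀ ℕ :=
  Finsupp.single (Sum.inl (x.1, k)) 1 + Finsupp.single (Sum.inr (k, x.2)) 1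

/-- The substitution `y_{ij} ↦ ∑ₖ u_{ik} v_{kj}` of a generic product for the generic matrix. -/
def mulHom (p q r : ℕ) : MvPolynomial (Fin p × Fin q) ℂ →ₐ[ℂ]
    MvPolynomial ((Fin p × Fin r) ⊕ (Fin r × Fin q)) ℂ :=
  aeval fun x => ∑ k : Fin r, X (Sum.inl (x.1, k)) * X (Sum.inr (k, x.2))

/-- A monomial is written as a product of variables at a family of cells `s`; its image is the sum
over all colourings of the family. -/
lemma mulHom_monomial {p q r : ℕ} {ι : Type} [Fintype ι] [DecidableEq ι] (s : ι → Fin p × Fin q) :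
    mulHom p q r (monomial (∑ t, Finsupp.single (s t) 1) 1) =
      ∑ c : ι → Fin r, monomial (∑ t, bigExp (s t) (c t)) 1 := by
  rw [monomial_sum_one, map_prod]
  have h : ∀ t, mulHom p q r (monomial (Finsupp.single (s t) 1) 1) =
      ∑ k : Fin r, monomial (bigExp (s t) k) 1 := by
    intro t
    change mulHom p q r (X (s t)) = _
    rw [mulHom, aeval_X]
    refine Finset.sum_congr rfl fun k _ => ?_
    simp [X, bigExp, monomial_mul]
  simp only [h, Finset.prod_univ_sum, Fintype.piFinset_univ, monomial_sum_one]

lemma coeff_mulHom_monomial {p q r : ℕ} {ι : Type} [Fintype ι] [DecidableEq ι]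
    (s : ι → Fin p × Fin q) (w : (Fin p × Fin r) ⊕ (Fin r × Fin q) →₀ ℕ) :
    coeff w (mulHom p q r (monomial (∑ t, Finsupp.single (s t) 1) 1)) =
      ((univ.filter fun c : ι → Fin r => ∑ t, bigExp (s t) (c t) = w).card : ℂ) := by
  classical
  rw [mulHom_monomial, coeff_sum]
  simp [coeff_monomial, Finset.sum_boole]

/-- The cells of `M`, repeated according to multiplicity. -/
abbrev Idx {p q : ℕ} (M : Fin p × Fin q →₀ ℕ) : Type := Σ x : Fin p × Fin q, Fin (M x)

lemma sum_idx {p q : ℕ} (M : Fin p × Fin q →₀ ℕ) :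
    ∑ t : Idx M, Finsupp.single t.1 1 = M := by
  rw [Fintype.sum_sigma]
  simp only [sum_const, card_univ, Fintype.card_fin]
  simp only [Finsupp.smul_single, smul_eq_mul, mul_one]
  exact Finsupp.univ_sum_single M

/-- The exponent of a coloured family determines the row content of each colour class. -/
lemma bigExp_card_inl {p q r : ℕ} {ι : Type} [Fintype ι] (s : ι → Fin p × Fin q) (c : ι → Fin r)
    (k : Fin r) (P : Fin p → Prop) [DecidablePred P] :
    (univ.filter fun t => c t = k ∧ P (s t).1).card =
      ∑ i with P i, (∑ t, bigExp (s t) (c t)) (Sum.inl (i, k)) := by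
  classical
  simp only [Finsupp.finsetSum_apply, bigExp, Finsupp.add_apply, Finsupp.single_apply]
  rw [Finset.sum_comm, Finset.card_filter]
  refine Finset.sum_congr rfl fun t _ => ?_
  simp only [Sum.inl.injEq, Prod.mk.injEq, reduceCtorEq, if_false, add_zero, Finset.sum_filter]
  rw [Finset.sum_eq_single (s t).1]
  · by_cases h1 : c t = k <;> by_cases h2 : P (s t).1 <;> simp [h1, h2]
  · intro b _ hb
    simp [hb.symm]
  · simp

/-- The exponent of a coloured family determines the column content of each colour class. -/
lemma bigExp_card_inr {p q r : ℕ} {ι : Type} [Fintype ι] (s : ι → Fin p × Fin q) (c : ι → Fin r)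
    (k : Fin r) (P : Fin q → Prop) [DecidablePred P] :
    (univ.filter fun t => c t = k ∧ P (s t).2).card =
      ∑ j with P j, (∑ t, bigExp (s t) (c t)) (Sum.inr (k, j)) := by
  classical
  simp only [Finsupp.finsetSum_apply, bigExp, Finsupp.add_apply, Finsupp.single_apply]
  rw [Finset.sum_comm, Finset.card_filter]
  refine Finset.sum_congr rfl fun t _ => ?_
  simp only [Sum.inr.injEq, Prod.mk.injEq, reduceCtorEq, if_false, zero_add, Finset.sum_filter]
  rw [Finset.sum_eq_single (s t).2]
  · by_cases h1 : c t = k <;> by_cases h2 : P (s t).2 <;> simp [h1, h2]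
  · intro b _ hb
    simp [hb.symm]
  · simp

/-! ### Quadrant counts and the weight -/

/-- Number of cells of `M`, with multiplicity, in the quadrant `[a, ∞) × [b, ∞)`. The corner is in
`ℕ × ℕ` so that shifting it by one never needs a range condition. -/
def quad {p q : ℕ} (M : Fin p × Fin q →₀ ℕ) (a b : ℕ) : ℕ :=
  ∑ x, if a ≤ x.1.1 ∧ b ≤ x.2.1 then M x else 0

lemma quad_sum_single {p q : ℕ} {ι : Type} [Fintype ι] (s : ι → Fin p × Fin q) (a b : ℕ) :
    quad (∑ t, Finsupp.single (s t) 1) a b =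
      (univ.filter fun t => a ≤ (s t).1.1 ∧ b ≤ (s t).2.1).card := by
  classical
  simp only [quad, Finsupp.finsetSum_apply, Finsupp.single_apply]
  rw [Finset.card_filter]
  have h : ∀ x : Fin p × Fin q, (if a ≤ x.1.1 ∧ b ≤ x.2.1 then ∑ t, (if s t = x then 1 else 0) else 0) =
      ∑ t, if s t = x then (if a ≤ x.1.1 ∧ b ≤ x.2.1 then 1 else 0) else 0 := by
    intro x
    split_ifs <;> simp
  simp only [h]
  rw [Finset.sum_comm]
  refine Finset.sum_congr rfl fun t _ => ?_
  rw [Finset.sum_ite_eq]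
  simp

/-- Among coloured families with the same exponent, one without strictly increasing pairs of equal
colour has the smallest quadrant counts: in each colour, the sets of cells with row `≥ a` and with
column `≥ b` are either disjoint or cover the whole class. -/
lemma quad_le {p q r : ℕ} {ι ι' : Type} [Fintype ι] [Fintype ι'] (s : ι → Fin p × Fin q)
    (c : ι → Fin r) (s' : ι' → Fin p × Fin q) (c' : ι' → Fin r)
    (hw : ∑ t, bigExp (s' t) (c' t) = ∑ t, bigExp (s t) (c t))
    (hs : ∀ t t', c t = c t' → (s t).1 < (s t').1 → ¬ (s t).2 < (s t').2) (a b : ℕ) :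
    quad (∑ t, Finsupp.single (s t) 1) a b ≤ quad (∑ t, Finsupp.single (s' t) 1) a b := by
  classical
  rw [quad_sum_single, quad_sum_single]
  rw [Finset.card_eq_sum_card_fiberwise (f := c) (t := univ) (fun _ _ => by simp),
    Finset.card_eq_sum_card_fiberwise (f := c') (t := univ) (fun _ _ => by simp)]
  refine Finset.sum_le_sum fun k _ => ?_
  have key : ∀ {κ : Type} [Fintype κ] (u : κ → Fin p × Fin q) (d : κ → Fin r),
      ((univ.filter fun t => d t = k ∧ a ≤ (u t).1.1) ∩
        (univ.filter fun t => d t = k ∧ b ≤ (u t).2.1)) =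
      ((univ.filter fun t => a ≤ (u t).1.1 ∧ b ≤ (u t).2.1).filter fun t => d t = k) := by
    intro κ _ u d
    ext t
    simp
    tauto
  rw [← key s c, ← key s' c']
  have hA := bigExp_card_inl s c k (fun i => a ≤ i.1)
  have hA' := bigExp_card_inl s' c' k (fun i => a ≤ i.1)
  have hB := bigExp_card_inr s c k (fun i => b ≤ i.1)
  have hB' := bigExp_card_inr s' c' k (fun i => b ≤ i.1)
  have hT := bigExp_card_inl s c k (fun _ => True)
  have hT' := bigExp_card_inl s' c' k (fun _ => True)
  rw [hw, ← hA] at hA'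
  rw [hw, ← hB] at hB'
  rw [hw, ← hT] at hT'
  by_cases hemp : ((univ.filter fun t => c t = k ∧ a ≤ (s t).1.1) ∩
        (univ.filter fun t => c t = k ∧ b ≤ (s t).2.1)) = ∅
  · rw [hemp]; simp
  obtain ⟨t, ht⟩ := Finset.nonempty_iff_ne_empty.mpr hemp
  have hun : (univ.filter fun t => c t = k ∧ True) ⊆ ((univ.filter fun t => c t = k ∧ a ≤ (s t).1.1) ∪
        (univ.filter fun t => c t = k ∧ b ≤ (s t).2.1)) := by
    intro t' ht'
    by_contra hcon
    simp only [mem_inter, mem_union, mem_filter, mem_univ, true_and, and_true, not_or, not_and, not_le] at ht ht' hcon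
    exact hs t' t (ht'.trans ht.1.1.symm) (Fin.lt_def.2 (lt_of_lt_of_le (hcon.1 ht') ht.1.2))
      (Fin.lt_def.2 (lt_of_lt_of_le (hcon.2 ht') ht.2.2))
  have hun' : ((univ.filter fun t => c' t = k ∧ a ≤ (s' t).1.1) ∪
        (univ.filter fun t => c' t = k ∧ b ≤ (s' t).2.1)) ⊆ (univ.filter fun t => c' t = k ∧ True) := by
    intro t' ht'
    simp only [mem_union, mem_filter, mem_univ, true_and, and_true] at ht' ⊢
    tauto
  have h1 := Finset.card_le_card hun
  have h2 := Finset.card_le_card hun'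
  have h3 := Finset.card_union_add_card_inter (univ.filter fun t => c t = k ∧ a ≤ (s t).1.1)
        (univ.filter fun t => c t = k ∧ b ≤ (s t).2.1)
  have h4 := Finset.card_union_add_card_inter (univ.filter fun t => c' t = k ∧ a ≤ (s' t).1.1)
        (univ.filter fun t => c' t = k ∧ b ≤ (s' t).2.1)
  have h5 : ((univ.filter fun t => c t = k ∧ a ≤ (s t).1.1) ∪
        (univ.filter fun t => c t = k ∧ b ≤ (s t).2.1)).card ≤
      (univ.filter fun t => c t = k ∧ True).card := Finset.card_le_card (by
    intro t' ht'
    simp only [mem_union, mem_filter, mem_univ, true_and, and_true] at ht' ⊢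
    tauto)
  omega

/-- The weight `∑ M_{ij} (i+1)(j+1)`, which is the sum of all quadrant counts. -/
def weight {p q : ℕ} (M : Fin p × Fin q →₀ ℕ) : ℕ := ∑ x, M x * ((x.1.1 + 1) * (x.2.1 + 1))

lemma weight_eq {p q : ℕ} (M : Fin p × Fin q →₀ ℕ) :
    weight M = ∑ ab ∈ range p ×ˢ range q, quad M ab.1 ab.2 := by
  simp only [weight, quad]
  rw [Finset.sum_comm]
  refine Finset.sum_congr rfl fun x _ => ?_
  rw [← Finset.sum_filter, Finset.sum_const, smul_eq_mul, mul_comm]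
  congr 1
  have : (range p ×ˢ range q).filter (fun ab : ℕ × ℕ => ab.1 ≤ x.1.1 ∧ ab.2 ≤ x.2.1) =
      range (x.1.1 + 1) ×ˢ range (x.2.1 + 1) := by
    ext ab
    have := x.1.2
    have := x.2.2
    simp only [mem_filter, mem_product, mem_range]
    omega
  rw [this, card_product, card_range, card_range]

/-- Quadrant counts determine `M` by inclusion-exclusion. -/
lemma eq_of_quad {p q : ℕ} (M M' : Fin p × Fin q →₀ ℕ) (h : ∀ a b, quad M a b = quad M' a b) :
    M = M' := by
  have key : ∀ (M : Fin p × Fin q →₀ ℕ) (y : Fin p × Fin q),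
      M y + quad M (y.1.1 + 1) y.2.1 + quad M y.1.1 (y.2.1 + 1) =
        quad M y.1.1 y.2.1 + quad M (y.1.1 + 1) (y.2.1 + 1) := by
    intro M y
    have hy : M y = ∑ x, if x = y then M x else 0 := by simp
    rw [hy]
    simp only [quad, ← Finset.sum_add_distrib]
    refine Finset.sum_congr rfl fun x _ => ?_
    have : x = y ↔ x.1.1 = y.1.1 ∧ x.2.1 = y.2.1 := by
      rw [Prod.ext_iff, Fin.ext_iff, Fin.ext_iff]
    simp only [this]
    split_ifs <;> omega
  ext y
  have h1 := key M y
  have h2 := key M' y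
  simp only [h] at h1
  omega

lemma eq_of_weight {p q : ℕ} (M M' : Fin p × Fin q →₀ ℕ) (h : ∀ a b, quad M a b ≤ quad M' a b)
    (hw : weight M' ≤ weight M) : M = M' := by
  refine eq_of_quad M M' fun a b => ?_
  by_cases hab : a < p ∧ b < q
  · rw [weight_eq, weight_eq] at hw
    have := (Finset.sum_eq_sum_iff_of_le (s := range p ×ˢ range q)
      (f := fun ab => quad M ab.1 ab.2) (g := fun ab => quad M' ab.1 ab.2) (fun ab _ => h _ _)).1
      (le_antisymm (Finset.sum_le_sum fun ab _ => h _ _) hw)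
    exact this (a, b) (by simp [hab])
  · have : ∀ N : Fin p × Fin q →₀ ℕ, quad N a b = 0 := by
      intro N
      refine Finset.sum_eq_zero fun x _ => if_neg ?_
      have := x.1.2
      have := x.2.2
      omega
    rw [this, this]

/-! ### Linear independence of chain-free monomials -/

/-- `M` contains a chain of `k + 1` cells, strictly increasing in both coordinates, that ends at
`x`. Only the values of the sequence at `0, …, k` matter. -/
def HasChain {p q : ℕ} (M : Fin p × Fin q →₀ ℕ) (k : ℕ) (x : Fin p × Fin q) : Prop :=
  ∃ s : ℕ → Fin p × Fin q, s k = x ∧ (∀ t ≤ k, M (s t) ≠ 0) ∧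
    ∀ t < k, (s t).1 < (s (t + 1)).1 ∧ (s t).2 < (s (t + 1)).2

lemma HasChain.step {p q : ℕ} {M : Fin p × Fin q →₀ ℕ} {k : ℕ} {x y : Fin p × Fin q}
    (h : HasChain M k x) (hy : M y ≠ 0) (h1 : x.1 < y.1) (h2 : x.2 < y.2) :
    HasChain M (k + 1) y := by
  obtain ⟨s, hs, hM, hlt⟩ := h
  refine ⟨fun t => if t ≤ k then s t else y, by simp, ?_, ?_⟩
  · intro t _
    by_cases h : t ≤ k <;> simp [h, hy, hM]
  · intro t ht
    rcases Nat.lt_succ_iff_lt_or_eq.1 ht with h | rfl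
    · simpa [h.le, Nat.succ_le_of_lt h] using hlt t h
    · simpa [hs] using ⟨h1, h2⟩

/-- Colour each cell by the length of the longest increasing chain ending there. -/
lemma exists_colour {p q r : ℕ} (M : Fin p × Fin q →₀ ℕ) (hM : ∀ x, ¬ HasChain M r x) :
    ∃ c : Idx M → Fin r, ∀ t t', c t = c t' → t.1.1 < t'.1.1 → ¬ t.1.2 < t'.1.2 := by
  classical
  have h0 : ∀ t : Idx M, M t.1 ≠ 0 := fun t => by have := t.2.2; omega
  have hc : ∀ t : Idx M, HasChain M (Nat.findGreatest (fun k => HasChain M k t.1) r) t.1 := fun t =>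
    Nat.findGreatest_spec (P := fun k => HasChain M k t.1) (Nat.zero_le r)
      ⟨fun _ => t.1, rfl, fun _ _ => h0 t, fun _ h => absurd h (Nat.not_lt_zero _)⟩
  have hr : ∀ t : Idx M, Nat.findGreatest (fun k => HasChain M k t.1) r < r := fun t =>
    lt_of_le_of_ne (Nat.findGreatest_le r) fun h => hM t.1 (by have := hc t; rwa [h] at this)
  refine ⟨fun t => ⟨_, hr t⟩, fun t t' heq h1 h2 => ?_⟩
  have := Nat.le_findGreatest (P := fun k => HasChain M k t'.1) (hr t) ((hc t).step (h0 t') h1 h2)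
  simp only [Fin.mk.injEq] at heq
  omega

/-- Chain-free monomials have linearly independent images under `mulHom`. -/
lemma eq_zero_of_mulHom {p q r : ℕ} (g : MvPolynomial (Fin p × Fin q) ℂ)
    (hg : ∀ M ∈ g.support, ∀ x, ¬ HasChain M r x) (h : mulHom p q r g = 0) : g = 0 := by
  classical
  by_contra hne
  -- the coefficient at `w` below sees only the monomial `M` of maximal weight
  obtain ⟨M, hM, hmax⟩ := Finset.exists_max_image g.support weight (support_nonempty.2 hne)
  obtain ⟨c, hc⟩ := exists_colour M (hg M hM)
  set w := ∑ t : Idx M, bigExp t.1 (c t) with hwdef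
  have hcoef : coeff w (mulHom p q r g) =
      ∑ N ∈ g.support, coeff N g * coeff w (mulHom p q r (monomial N 1)) := by
    conv_lhs => rw [g.as_sum]
    rw [map_sum, coeff_sum]
    refine Finset.sum_congr rfl fun N _ => ?_
    rw [← mul_one (coeff N g), ← smul_eq_mul, ← smul_monomial, map_smul, coeff_smul, smul_eq_mul, smul_eq_mul, mul_one]
  rw [h, coeff_zero, Finset.sum_eq_single M] at hcoef
  · rcases mul_eq_zero.1 hcoef.symm with h' | h'
    · exact mem_support_iff.1 hM h'
    · have e := coeff_mulHom_monomial (r := r) (fun t : Idx M => t.1) w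
      rw [sum_idx, h'] at e
      have e' := (Nat.cast_eq_zero.1 e.symm)
      rw [Finset.card_eq_zero] at e'
      have : c ∈ (∅ : Finset (Idx M → Fin r)) := by
        rw [← e']; simp [hwdef]
      simp at this
  · intro N hN hNM
    rw [mul_eq_zero]; right
    have e := coeff_mulHom_monomial (r := r) (fun t : Idx N => t.1) w
    rw [sum_idx] at e
    rw [e, Nat.cast_eq_zero, Finset.card_eq_zero, Finset.filter_eq_empty_iff]
    intro c' _ hc'
    have hq := quad_le (fun t : Idx M => t.1) c (fun t : Idx N => t.1) c' hc' hc
    rw [sum_idx, sum_idx] at hq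
    exact hNM (eq_of_weight M N hq (hmax N hN)).symm
  · exact fun hn => absurd hM hn

/-! ### Reduction modulo the minors -/

/-- The ideal of `(r + 1)`-minors of the generic `p × q` matrix. Repeated or unordered rows and
columns are allowed; they contribute zero or a minor up to sign. -/
def minorIdeal (p q r : ℕ) : Ideal (MvPolynomial (Fin p × Fin q) ℂ) :=
  Ideal.span {f | ∃ (ρ : Fin (r + 1) → Fin p) (γ : Fin (r + 1) → Fin q),
    f = (Matrix.of fun a b => (X (ρ a, γ b) : MvPolynomial (Fin p × Fin q) ℂ)).det}

lemma weight_add {p q : ℕ} (M N : Fin p × Fin q →₀ ℕ) : weight (M + N) = weight M + weight N := by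
  simp [weight, add_mul, Finset.sum_add_distrib]

lemma weight_sum_single {p q : ℕ} {ι : Type} [Fintype ι] (s : ι → Fin p × Fin q) :
    weight (∑ t, Finsupp.single (s t) 1) = ∑ t, ((s t).1.1 + 1) * ((s t).2.1 + 1) := by
  classical
  simp only [weight, Finsupp.finsetSum_apply, Finsupp.single_apply, Finset.sum_mul]
  rw [Finset.sum_comm]
  refine Finset.sum_congr rfl fun t _ => ?_
  rw [Finset.sum_eq_single (s t)]
  · simp
  · intro b _ hb
    simp [hb.symm]
  · simp

/-- The diagonal term of a minor is its unique term of maximal weight. -/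
lemma weight_perm_lt {p q k : ℕ} (i : Fin k → Fin p) (j : Fin k → Fin q) (hi : StrictMono i)
    (hj : StrictMono j) (σ : Equiv.Perm (Fin k)) (hσ : σ ≠ 1) :
    weight (∑ t, Finsupp.single (i (σ t), j t) 1) < weight (∑ t, Finsupp.single (i t, j t) 1) := by
  rw [weight_sum_single, weight_sum_single]
  have hm : Monovary (fun t => (i t).1 + 1) (fun t => (j t).1 + 1) := by
    intro a b hab
    have : j a < j b := Fin.lt_def.2 (by simpa using hab)
    have := hi (hj.lt_iff_lt.1 this)
    simpa using this.le
  refine (hm.sum_comp_perm_mul_lt_sum_mul_iff (σ := σ)).2 fun hmon => hσ ?_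
  have hmono : StrictMono σ := by
    refine Monotone.strictMono_of_injective (fun a b hab => ?_) σ.injective
    rcases hab.eq_or_lt with rfl | hab
    · exact le_rfl
    · have := hmon (i := a) (j := b) (by simpa using hj hab)
      have : i (σ a) ≤ i (σ b) := by simpa using this
      exact hi.le_iff_le.1 this
  ext t
  have : (σ : Fin k → Fin k) = id := by
    exact hmono.eq_id
  simp [this]

/-- Straightening of a monomial: a chain of `r + 1` cells is replaced, modulo the corresponding
minor, by terms of smaller weight. -/
lemma monomial_mem {p q r : ℕ} (M : Fin p × Fin q →₀ ℕ) :
    ∃ g : MvPolynomial (Fin p × Fin q) ℂ, (∀ N ∈ g.support, ∀ x, ¬ HasChain N r x) ∧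
      monomial M 1 - g ∈ minorIdeal p q r := by
  classical
  induction hn : weight M using Nat.strong_induction_on generalizing M with
  | _ n ih =>
  by_cases hM : ∀ x, ¬ HasChain M r x
  · refine ⟨monomial M 1, fun N hN => ?_, by simp⟩
    rw [Finset.mem_singleton.1 (support_monomial_subset hN)]
    exact hM
  push Not at hM
  obtain ⟨x, s, -, hs0, hs⟩ := hM
  set i : Fin (r + 1) → Fin p := fun t => (s t).1 with hi_def
  set j : Fin (r + 1) → Fin q := fun t => (s t).2 with hj_def
  have hi : StrictMono i := Fin.strictMono_iff_lt_succ.2 fun t => (hs t t.2).1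
  have hj : StrictMono j := Fin.strictMono_iff_lt_succ.2 fun t => (hs t t.2).2
  set D : Equiv.Perm (Fin (r + 1)) → (Fin p × Fin q →₀ ℕ) :=
    fun σ => ∑ t, Finsupp.single (i (σ t), j t) 1 with hD
  have hDM : D 1 ≤ M := by
    intro x
    simp only [hD, Equiv.Perm.coe_one, id_eq, Finsupp.finsetSum_apply, Finsupp.single_apply]
    by_cases hx : ∃ t, (i t, j t) = x
    · obtain ⟨t, rfl⟩ := hx
      rw [Finset.sum_eq_single t]
      · have := hs0 t (Nat.lt_succ_iff.1 t.2)
        simp only [if_true]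
        exact Nat.one_le_iff_ne_zero.2 this
      · intro b _ hb
        rw [if_neg]
        intro h
        exact hb (hi.injective (Prod.ext_iff.1 h).1)
      · simp
    · rw [Finset.sum_eq_zero]
      · exact Nat.zero_le _
      · intro t _
        rw [if_neg]
        exact fun h => hx ⟨t, h⟩
  obtain ⟨M0, rfl⟩ := exists_add_of_le hDM
  have hlt : ∀ σ ≠ 1, weight (D σ + M0) < n := by
    intro σ hσ
    rw [← hn, weight_add, weight_add]
    exact Nat.add_lt_add_right (weight_perm_lt i j hi hj σ hσ) _
  choose! g hg1 hg2 using fun σ (hσ : σ ≠ 1) => ih _ (hlt σ hσ) (D σ + M0) rfl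
  have hdet : (Matrix.of fun a b => (X (i a, j b) : MvPolynomial (Fin p × Fin q) ℂ)).det =
      ∑ σ : Equiv.Perm (Fin (r + 1)), Equiv.Perm.sign σ • monomial (D σ) (1 : ℂ) := by
    rw [Matrix.det_apply]
    refine Finset.sum_congr rfl fun σ _ => ?_
    rw [hD, monomial_sum_one]
    rfl
  have hmem : monomial M0 (1 : ℂ) *
      (Matrix.of fun a b => (X (i a, j b) : MvPolynomial (Fin p × Fin q) ℂ)).det ∈
      minorIdeal p q r := Ideal.mul_mem_left _ _ (Ideal.subset_span ⟨i, j, rfl⟩)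
  rw [hdet, ← Finset.add_sum_erase _ _ (Finset.mem_univ 1), mul_add, Finset.mul_sum] at hmem
  refine ⟨-∑ σ ∈ univ.erase 1, Equiv.Perm.sign σ • g σ, ?_, ?_⟩
  · intro N hN
    rw [support_neg] at hN
    obtain ⟨σ, hσ, hN⟩ := Finset.mem_biUnion.1 (support_sum hN)
    have hσ := Finset.ne_of_mem_erase hσ
    refine hg1 σ hσ N ?_
    rcases Int.units_eq_one_or (Equiv.Perm.sign σ) with h | h
    · simpa [h] using hN
    · simpa [h] using hN
  · have h2 : ∑ σ ∈ univ.erase (1 : Equiv.Perm (Fin (r + 1))),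
        Equiv.Perm.sign σ • (monomial (D σ + M0) 1 - g σ) ∈ minorIdeal p q r := by
      refine Ideal.sum_mem _ fun σ hσ => ?_
      have := hg2 σ (Finset.ne_of_mem_erase hσ)
      rcases Int.units_eq_one_or (Equiv.Perm.sign σ) with h | h
      · simpa [h] using this
      · rw [h, Units.neg_smul, one_smul]
        exact neg_mem this
    have h3 := sub_mem hmem h2
    convert h3 using 1
    simp only [Equiv.Perm.sign_one, one_smul, mul_smul_comm, monomial_mul, mul_one, smul_sub,
      Finset.sum_sub_distrib, add_comm M0]
    ring

lemma exists_reduced {p q : ℕ} (r : ℕ) (f : MvPolynomial (Fin p × Fin q) ℂ) :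
    ∃ g : MvPolynomial (Fin p × Fin q) ℂ, (∀ N ∈ g.support, ∀ x, ¬ HasChain N r x) ∧
      f - g ∈ minorIdeal p q r := by
  classical
  choose g hg1 hg2 using fun M : Fin p × Fin q →₀ ℕ => monomial_mem (r := r) M
  refine ⟨∑ M ∈ f.support, C (coeff M f) * g M, ?_, ?_⟩
  · intro N hN
    obtain ⟨M, _, hN⟩ := Finset.mem_biUnion.1 (support_sum hN)
    refine hg1 M N ?_
    rw [← smul_eq_C_mul] at hN
    exact support_smul hN
  · conv => enter [2, 1]; rw [f.as_sum]
    rw [← Finset.sum_sub_distrib]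
    refine Ideal.sum_mem _ fun M _ => ?_
    have := Ideal.mul_mem_left _ (C (coeff M f)) (hg2 M)
    rwa [mul_sub, C_mul_monomial, mul_one] at this

/-! ### The second fundamental theorem -/

lemma det_eq_zero_of_rank_lt {k : ℕ} (N : Matrix (Fin k) (Fin k) ℝ) (h : N.rank < k) :
    N.det = 0 := by
  by_contra hne
  have := Matrix.rank_of_isUnit N ((Matrix.isUnit_iff_isUnit_det N).2 (isUnit_iff_ne_zero.2 hne))
  rw [Fintype.card_fin] at this
  omega

lemma eval_minor {p m r : ℕ} (Z : Matrix (Fin p) (Fin m) ℝ) (hZ : Z.rank ≤ r)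
    (ρ : Fin (r + 1) → Fin p) (γ : Fin (r + 1) → Fin m) :
    eval (fun x => ((Z x.1 x.2 : ℝ) : ℂ))
      (Matrix.of fun a b => (X (ρ a, γ b) : MvPolynomial (Fin p × Fin m) ℂ)).det = 0 := by
  rw [RingHom.map_det]
  have h : (eval (fun x : Fin p × Fin m => ((Z x.1 x.2 : ℝ) : ℂ))).mapMatrix
      (Matrix.of fun a b => (X (ρ a, γ b) : MvPolynomial (Fin p × Fin m) ℂ)) =
      Complex.ofRealHom.mapMatrix (Z.submatrix ρ γ) := by
    ext a b
    simp
  rw [h, ← RingHom.map_det, det_eq_zero_of_rank_lt, map_zero]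
  have := Matrix.rank_submatrix_le Z ρ γ
  omega

/-- Second fundamental theorem: a polynomial vanishing on all real matrices `U * V` of inner
dimension `r` lies in the ideal of `(r + 1)`-minors. -/
theorem mem_minorIdeal {p q r : ℕ} (f : MvPolynomial (Fin p × Fin q) ℂ)
    (hf : ∀ (U : Matrix (Fin p) (Fin r) ℝ) (V : Matrix (Fin r) (Fin q) ℝ),
      eval (fun x => (((U * V) x.1 x.2 : ℝ) : ℂ)) f = 0) : f ∈ minorIdeal p q r := by
  obtain ⟨g, hg, hfg⟩ := exists_reduced r f
  have hev : ∀ (z : (Fin p × Fin r) ⊕ (Fin r × Fin q) → ℂ) (f : MvPolynomial (Fin p × Fin q) ℂ),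
      eval z (mulHom p q r f) =
        eval (fun x => ∑ k, z (Sum.inl (x.1, k)) * z (Sum.inr (k, x.2))) f := by
    intro z f
    rw [mulHom, aeval_def, eval₂_eq', map_sum, eval_eq']
    simp [algebraMap_eq]
  have hg0 : g = 0 := by
    refine eq_zero_of_mulHom (r := r) g hg ?_
    refine funext_set (fun _ => Set.range ((↑) : ℝ → ℂ))
      (fun _ => Set.infinite_range_of_injective Complex.ofReal_injective) fun z hz => ?_
    choose w hw using fun i => hz i (Set.mem_univ i)
    set U : Matrix (Fin p) (Fin r) ℝ := Matrix.of fun i k => w (Sum.inl (i, k)) with hU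
    set V : Matrix (Fin r) (Fin q) ℝ := Matrix.of fun k j => w (Sum.inr (k, j)) with hV
    have hz' : (fun x : Fin p × Fin q => ∑ k, z (Sum.inl (x.1, k)) * z (Sum.inr (k, x.2))) =
        fun x => (((U * V) x.1 x.2 : ℝ) : ℂ) := by
      funext x
      simp [Matrix.mul_apply, hU, hV, hw]
    rw [hev, hz', map_zero]
    have hker : minorIdeal p q r ≤
        RingHom.ker (eval fun x : Fin p × Fin q => (((U * V) x.1 x.2 : ℝ) : ℂ)) := by
      refine Ideal.span_le.2 ?_
      rintro _ ⟨ρ, γ, rfl⟩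
      refine eval_minor _ ?_ ρ γ
      refine (Matrix.rank_mul_le_left U V).trans ?_
      simpa using Matrix.rank_le_card_width U
    have := hker hfg
    rwa [RingHom.mem_ker, map_sub, hf U V, zero_sub, neg_eq_zero] at this
  simpa [hg0] using hfg

/-! ### The set of masked matrices -/

lemma exists_left_inv {a b : ℕ} (B : Matrix (Fin a) (Fin b) ℝ)
    (hB : LinearIndependent ℝ (fun j i => B i j)) : ∃ Z : Matrix (Fin b) (Fin a) ℝ, Z * B = 1 := by
  have hinj : Function.Injective B.mulVec := Matrix.mulVec_injective_iff.2 hB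
  obtain ⟨g, hg⟩ := LinearMap.exists_leftInverse_of_injective (Matrix.toLin' B)
    (LinearMap.ker_eq_bot.2 hinj)
  refine ⟨LinearMap.toMatrix' g, ?_⟩
  have h := LinearMap.toMatrix'_comp g (Matrix.toLin' B)
  rwa [hg, LinearMap.toMatrix'_id, LinearMap.toMatrix'_toLin', eq_comm] at h


lemma rank_maskMat (n : ℕ → ℕ) (A : (ℓ : ℕ) → Fin (n ℓ) → Bool) (ℓ : ℕ) :
    (maskMat n A ℓ).rank = activeCard n A ℓ := by
  classical
  rw [maskMat, Matrix.rank_diagonal, activeCard, Fintype.card_subtype]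
  congr 1
  ext i
  simp

lemma rank_preM_le (n : ℕ → ℕ) (A : (ℓ : ℕ) → Fin (n ℓ) → Bool)
    (W : (ℓ : ℕ) → Matrix (Fin (n (ℓ + 1))) (Fin (n ℓ)) ℝ) (ℓ : ℕ) (hℓ : 1 ≤ ℓ) (k : ℕ)
    (hk : ℓ ≤ k) : (preM n A W k).rank ≤ activeCard n A ℓ := by
  induction k, hk using Nat.le_induction with
  | base =>
    obtain ⟨ℓ, rfl⟩ := Nat.exists_eq_add_of_le' hℓ
    rw [preM, ← rank_maskMat]
    exact Matrix.rank_mul_le_left _ _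
  | succ k _ ih =>
    rw [preM]
    exact ((Matrix.rank_mul_le_right _ _).trans (Matrix.rank_mul_le_right _ _)).trans ih

lemma rank_maskedMatrix_le (n : ℕ → ℕ) (K : ℕ) (A : (ℓ : ℕ) → Fin (n ℓ) → Bool) (r : ℕ)
    (hr : IsLeast ((fun ℓ => activeCard n A ℓ) '' Set.Icc 1 K) r)
    (W : (ℓ : ℕ) → Matrix (Fin (n (ℓ + 1))) (Fin (n ℓ)) ℝ) :
    (maskedMatrix n A W (K + 1)).rank ≤ r := by
  obtain ⟨ℓ, hℓ, rfl⟩ := hr.1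
  rw [maskedMatrix]
  exact (Matrix.rank_mul_le_right _ _).trans (rank_preM_le n A W ℓ hℓ.1 K hℓ.2)

/-- A layer with at least `r` active neurons lets an `r`-dimensional signal pass unchanged. -/
lemma exists_section (n : ℕ → ℕ) (A : (ℓ : ℕ) → Fin (n ℓ) → Bool) (r ℓ : ℕ)
    (h : r ≤ activeCard n A ℓ) : ∃ (E : Matrix (Fin (n ℓ)) (Fin r) ℝ)
      (G : Matrix (Fin r) (Fin (n ℓ)) ℝ), G * (maskMat n A ℓ * E) = 1 := by
  set e := Finset.orderEmbOfCardLe _ h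
  have he : ∀ k, A ℓ (e k) = true := fun k =>
    (Finset.mem_filter.1 (Finset.orderEmbOfCardLe_mem _ h k)).2
  refine ⟨Matrix.of fun i k => if e k = i then 1 else 0,
    Matrix.of fun k i => if e k = i then 1 else 0, ?_⟩
  have hmask : maskMat n A ℓ * (Matrix.of fun i k => if e k = i then (1 : ℝ) else 0) =
      Matrix.of fun i k => if e k = i then (1 : ℝ) else 0 := by
    ext i k
    rw [maskMat, Matrix.diagonal_mul, Matrix.of_apply]
    by_cases h : e k = i
    · simp [← h, he]
    · simp [h]
  rw [hmask]
  ext k l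
  rw [Matrix.mul_apply, Matrix.one_apply]
  simp only [Matrix.of_apply, ite_mul, one_mul, zero_mul, Finset.sum_ite_eq, Finset.mem_univ,
    if_true, e.injective.eq_iff]
  simp only [eq_comm]

/-- Every product of inner dimension `r` is a masked matrix: the first weight matrix applies `V`, the
last one applies `U`, and the hidden layers transmit through `r` active neurons. -/
lemma exists_maskedMatrix_eq (n : ℕ → ℕ) (K : ℕ) (hK : 1 ≤ K) (A : (ℓ : ℕ) → Fin (n ℓ) → Bool)
    (r : ℕ) (hr : IsLeast ((fun ℓ => activeCard n A ℓ) '' Set.Icc 1 K) r)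
    (U : Matrix (Fin (n (K + 1))) (Fin r) ℝ) (V : Matrix (Fin r) (Fin (n 0)) ℝ) :
    ∃ W, maskedMatrix n A W (K + 1) = U * V := by
  have hsec : ∀ ℓ, ∃ (E : Matrix (Fin (n ℓ)) (Fin r) ℝ) (G : Matrix (Fin r) (Fin (n ℓ)) ℝ),
      1 ≤ ℓ → ℓ ≤ K → G * (maskMat n A ℓ * E) = 1 := by
    intro ℓ
    by_cases h : 1 ≤ ℓ ∧ ℓ ≤ K
    · obtain ⟨E, G, hEG⟩ := exists_section n A r ℓ (hr.2 ⟨ℓ, h, rfl⟩)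
      exact ⟨E, G, fun _ _ => hEG⟩
    · exact ⟨0, 0, fun h1 h2 => absurd ⟨h1, h2⟩ h⟩
  choose E G hEG using hsec
  set E' := Function.update E (K + 1) U
  set G' := Function.update G 0 V
  have hE' : ∀ ℓ ≤ K, E' ℓ = E ℓ := fun ℓ h => Function.update_of_ne (by omega) _ _
  have hG' : ∀ ℓ, 1 ≤ ℓ → G' ℓ = G ℓ := fun ℓ h => Function.update_of_ne (by omega) _ _
  set W : (ℓ : ℕ) → Matrix (Fin (n (ℓ + 1))) (Fin (n ℓ)) ℝ := fun ℓ => E' (ℓ + 1) * G' ℓ with hW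
  have hstep : ∀ ℓ, 1 ≤ ℓ → ℓ ≤ K → G' ℓ * (maskMat n A ℓ * (E' ℓ * V)) = V := by
    intro ℓ h1 h2
    rw [hE' ℓ h2, hG' ℓ h1, ← Matrix.mul_assoc (maskMat n A ℓ), ← Matrix.mul_assoc, hEG ℓ h1 h2,
      Matrix.one_mul]
  have hpre : ∀ ℓ, 1 ≤ ℓ → ℓ ≤ K → preM n A W ℓ = maskMat n A ℓ * (E' ℓ * V) := by
    intro ℓ h1
    induction ℓ, h1 using Nat.le_induction with
    | base =>
      intro _
      have : G' 0 = V := Function.update_self _ _ _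
      rw [preM, preM, hW]
      simp only [this, Matrix.mul_one]
    | succ ℓ h1 ih =>
      intro h2
      rw [preM, ih (by omega), hW]
      simp only [Matrix.mul_assoc]
      rw [hstep ℓ h1 (by omega)]
  refine ⟨W, ?_⟩
  have hU : E' (K + 1) = U := Function.update_self _ _ _
  rw [maskedMatrix, hpre K hK le_rfl, hW]
  simp only [Matrix.mul_assoc]
  rw [hstep K hK le_rfl, hU]

end DetIdeal

/-- Generators of the vanishing ideal of the image of
`θ ↦ M_A(θ)·X` for a dataset `X` in general position (every set of `min{n_0, m}`
columns linearly independent), with `L = K + 1 ≥ 2` and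
`r = min_{1 ≤ ℓ ≤ L-1} Σ_i A^ℓ_i`.
(i) If `m ≤ n_0`, the ideal is generated by all `(r+1)×(r+1)` minors of the generic
matrix `Y`.  (ii) If `m > n_0` and `x^{(i)} = Σ_{j>m-n_0} λ_{ij} x^{(j)}` for
`i ≤ m - n_0`, the ideal is generated by the corresponding linear forms together
with all `(r+1)×(r+1)` minors of the last `n_0` columns of `Y`. -/
theorem statement4 (n : ℕ → ℕ) (K : ℕ) (hK : 1 ≤ K)
    (A : (ℓ : ℕ) → Fin (n ℓ) → Bool) (r : ℕ)
    (hr : IsLeast ((fun ℓ => activeCard n A ℓ) '' Set.Icc 1 K) r)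
    (m : ℕ) (X : Matrix (Fin (n 0)) (Fin m) ℝ)
    (hgen : ∀ s : Finset (Fin m), s.card = min (n 0) m →
      LinearIndependent ℝ (fun j : s => fun a => X a j.1)) :
    ((m ≤ n 0) →
      vanishingIdeal {y : Fin (n (K + 1)) × Fin m → ℝ |
          ∃ W : (ℓ : ℕ) → Matrix (Fin (n (ℓ + 1))) (Fin (n ℓ)) ℝ,
            y = fun q => (maskedMatrix n A W (K + 1) * X) q.1 q.2} =
        Ideal.span {f : MvPolynomial (Fin (n (K + 1)) × Fin m) ℂ |
          ∃ (ρ : Fin (r + 1) → Fin (n (K + 1))) (γ : Fin (r + 1) → Fin m),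
            f = (Matrix.of fun a b =>
              (MvPolynomial.X (ρ a, γ b) : MvPolynomial (Fin (n (K + 1)) × Fin m) ℂ)).det}) ∧
    ((h : n 0 < m) → ∀ lam : Fin (m - n 0) → Fin (n 0) → ℝ,
      (∀ i : Fin (m - n 0),
        (fun a => X a ⟨i.1, by have := i.2; omega⟩) =
          ∑ j : Fin (n 0), lam i j • (fun a => X a ⟨m - n 0 + j.1, by have := j.2; omega⟩)) →
      vanishingIdeal {y : Fin (n (K + 1)) × Fin m → ℝ |
          ∃ W : (ℓ : ℕ) → Matrix (Fin (n (ℓ + 1))) (Fin (n ℓ)) ℝ,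
            y = fun q => (maskedMatrix n A W (K + 1) * X) q.1 q.2} =
        Ideal.span
          ({f : MvPolynomial (Fin (n (K + 1)) × Fin m) ℂ |
              ∃ (kk : Fin (n (K + 1))) (i : Fin (m - n 0)),
                f = MvPolynomial.X (kk, (⟨i.1, by have := i.2; omega⟩ : Fin m)) -
                  ∑ j : Fin (n 0), MvPolynomial.C ((lam i j : ℂ)) *
                    MvPolynomial.X (kk, (⟨m - n 0 + j.1, by have := j.2; omega⟩ : Fin m))} ∪
            {f : MvPolynomial (Fin (n (K + 1)) × Fin m) ℂ |
              ∃ (ρ : Fin (r + 1) → Fin (n (K + 1))) (γ : Fin (r + 1) → Fin (n 0)),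
                f = (Matrix.of fun a b =>
                  (MvPolynomial.X (ρ a, (⟨m - n 0 + (γ b).1, by have := (γ b).2; omega⟩ : Fin m)) :
                    MvPolynomial (Fin (n (K + 1)) × Fin m) ℂ)).det})) := by
  classical
  have hrank : ∀ W, (maskedMatrix n A W (K + 1) * X).rank ≤ r := fun W =>
    (Matrix.rank_mul_le_left _ _).trans (DetIdeal.rank_maskedMatrix_le n K A r hr W)
  -- every product of an `r`-column and an `r`-row matrix occurs on a set of independent columns
  have hsurj : ∀ {q : ℕ} (γ : Fin q → Fin m), LinearIndependent ℝ (fun j a => X a (γ j)) →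
      ∀ (U : Matrix (Fin (n (K + 1))) (Fin r) ℝ) (V : Matrix (Fin r) (Fin q) ℝ),
        ∃ W, ∀ k j, (maskedMatrix n A W (K + 1) * X) k (γ j) = (U * V) k j := by
    intro q γ hγ U V
    obtain ⟨Z, hZ⟩ := DetIdeal.exists_left_inv (X.submatrix id γ) hγ
    obtain ⟨W, hW⟩ := DetIdeal.exists_maskedMatrix_eq n K hK A r hr U (V * Z)
    refine ⟨W, fun k j => ?_⟩
    have h : (maskedMatrix n A W (K + 1) * X).submatrix id γ = U * V := by
      rw [hW, Matrix.submatrix_mul _ _ id id γ Function.bijective_id, Matrix.submatrix_id_id,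
        Matrix.mul_assoc, Matrix.mul_assoc, hZ, Matrix.mul_one]
    rw [← h]
    rfl
  -- the linear relations between the columns of `X` pass to `M_A(θ) * X`
  have hrel : ∀ (h : n 0 < m) (lam : Fin (m - n 0) → Fin (n 0) → ℝ),
      (∀ i : Fin (m - n 0), (fun a => X a ⟨i.1, by have := i.2; omega⟩) =
        ∑ j : Fin (n 0), lam i j • (fun a => X a ⟨m - n 0 + j.1, by have := j.2; omega⟩)) →
      ∀ W k (i : Fin (m - n 0)),
        (maskedMatrix n A W (K + 1) * X) k ⟨i.1, by have := i.2; omega⟩ =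
        ∑ j : Fin (n 0), lam i j *
          (maskedMatrix n A W (K + 1) * X) k ⟨m - n 0 + j.1, by have := j.2; omega⟩ := by
    intro h lam hlam W k i
    simp only [Matrix.mul_apply, Finset.mul_sum]
    rw [Finset.sum_comm]
    refine Finset.sum_congr rfl fun a _ => ?_
    have := congrFun (hlam i) a
    simp only [Finset.sum_apply, Pi.smul_apply, smul_eq_mul] at this
    rw [this, Finset.mul_sum]
    exact Finset.sum_congr rfl fun j _ => by ring
  refine ⟨fun hm => le_antisymm ?_ ?_, fun h lam hlam => le_antisymm ?_ ?_⟩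
  · intro f hf
    refine DetIdeal.mem_minorIdeal f fun U V => ?_
    have hli : LinearIndependent ℝ (fun (j : Fin m) a => X a j) := by
      have := hgen Finset.univ (by simp [hm])
      exact this.comp (fun j : Fin m => (⟨j, Finset.mem_univ j⟩ : (Finset.univ : Finset (Fin m))))
        (fun a b hab => by simpa using hab)
    obtain ⟨W, hW⟩ := hsurj id hli U V
    have := hf _ ⟨W, rfl⟩
    simpa only [← hW, id_eq] using this
  · refine Ideal.span_le.2 ?_
    rintro _ ⟨ρ, γ, rfl⟩ _ ⟨W, rfl⟩
    exact DetIdeal.eval_minor _ (hrank W) ρ γ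
  · intro f hf
    set γ : Fin (n 0) → Fin m := fun j => ⟨m - n 0 + j.1, by have := j.2; omega⟩ with hγ
    set δ : Fin (m - n 0) → Fin m := fun i => ⟨i.1, by have := i.2; omega⟩ with hδ
    have hγinj : Function.Injective γ := fun a b hab => by
      simp only [hγ, Fin.mk.injEq] at hab
      exact Fin.ext (by omega)
    have hli : LinearIndependent ℝ (fun (j : Fin (n 0)) a => X a (γ j)) := by
      have := hgen (Finset.univ.image γ) (by
        rw [Finset.card_image_of_injective _ hγinj, Finset.card_univ, Fintype.card_fin]
        omega)
      exact this.comp (fun j : Fin (n 0) =>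
        (⟨γ j, Finset.mem_image_of_mem _ (Finset.mem_univ j)⟩ : (Finset.univ.image γ : Finset _)))
        (fun a b hab => hγinj (by simpa using hab))
    -- `I` is the ideal generated by the linear forms and the minors
    set I : Ideal (MvPolynomial (Fin (n (K + 1)) × Fin m) ℂ) := Ideal.span _
    -- substitution eliminating the first `m - n 0` columns
    let S : Fin (n (K + 1)) × Fin m → MvPolynomial (Fin (n (K + 1)) × Fin (n 0)) ℂ := fun x =>
      if hx : x.2.1 < m - n 0 then ∑ j, MvPolynomial.C ((lam ⟨x.2.1, hx⟩ j : ℂ)) *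
        MvPolynomial.X (x.1, j)
      else MvPolynomial.X (x.1, ⟨x.2.1 - (m - n 0), by have := x.2.2; omega⟩)
    let ψ := MvPolynomial.aeval (R := ℂ) S
    let inc := MvPolynomial.rename (R := ℂ)
      (fun x : Fin (n (K + 1)) × Fin (n 0) => (x.1, γ x.2))
    have hcol : ∀ c : Fin m, (∃ i, c = δ i) ∨ ∃ j, c = γ j := by
      intro c
      by_cases hc : c.1 < m - n 0
      · exact Or.inl ⟨⟨c.1, hc⟩, rfl⟩
      · exact Or.inr ⟨⟨c.1 - (m - n 0), by have := c.2; omega⟩,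
          Fin.ext (by simp only [hγ]; omega)⟩
    have hSδ : ∀ k i, S (k, δ i) = ∑ j, MvPolynomial.C ((lam i j : ℂ)) * MvPolynomial.X (k, j) := by
      intro k i
      simp [S, hδ]
    have hSγ : ∀ k j, S (k, γ j) = MvPolynomial.X (k, j) := by
      intro k j
      simp [S, hγ]
    -- modulo the linear forms, a polynomial equals its reduction to the last `n 0` columns
    have hcongr : (Ideal.Quotient.mkₐ ℂ I).comp (inc.comp ψ) = Ideal.Quotient.mkₐ ℂ I := by
      refine MvPolynomial.algHom_ext fun x => ?_
      obtain ⟨k, c⟩ := x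
      simp only [AlgHom.comp_apply, ψ, MvPolynomial.aeval_X]
      rcases hcol c with ⟨i, rfl⟩ | ⟨j, rfl⟩
      · rw [hSδ]
        refine Eq.symm ((Ideal.Quotient.mk_eq_mk_iff_sub_mem _ _).2 ?_)
        refine Ideal.subset_span (Or.inl ⟨k, i, ?_⟩)
        simp [inc, map_sum, hγ, hδ]
      · rw [hSγ]
        simp [inc]
    have hψ : ψ f ∈ DetIdeal.minorIdeal (n (K + 1)) (n 0) r := by
      refine DetIdeal.mem_minorIdeal _ fun U V => ?_
      obtain ⟨W, hW⟩ := hsurj γ hli U V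
      have hfW := hf _ ⟨W, rfl⟩
      rw [← hfW]
      have hcomp : (MvPolynomial.aeval (R := ℂ)
          (fun x : Fin (n (K + 1)) × Fin (n 0) => (((U * V) x.1 x.2 : ℝ) : ℂ))).comp ψ =
          MvPolynomial.aeval (R := ℂ) (fun x : Fin (n (K + 1)) × Fin m =>
            (((maskedMatrix n A W (K + 1) * X) x.1 x.2 : ℝ) : ℂ)) := by
        refine MvPolynomial.algHom_ext fun x => ?_
        obtain ⟨k, c⟩ := x
        simp only [AlgHom.comp_apply, ψ, MvPolynomial.aeval_X]
        rcases hcol c with ⟨i, rfl⟩ | ⟨j, rfl⟩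
        · rw [hSδ, hrel h lam hlam W k i]
          have hW' : ∀ k (j : Fin (n 0)), (maskedMatrix n A W (K + 1) * X) k
              ⟨m - n 0 + j.1, by have := j.2; omega⟩ = (U * V) k j := hW
          simp [hW']
        · rw [hSγ, hW]
          simp
      exact DFunLike.congr_fun hcomp f
    have hinc : inc (ψ f) ∈ I := by
      have hle : DetIdeal.minorIdeal (n (K + 1)) (n 0) r ≤ I.comap inc := by
        refine Ideal.span_le.2 ?_
        rintro _ ⟨ρ, c, rfl⟩
        refine Ideal.subset_span (Or.inr ⟨ρ, c, ?_⟩)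
        rw [AlgHom.map_det]
        congr 1
        ext a b
        simp [inc, hγ]
      exact hle hψ
    have h1 := DFunLike.congr_fun hcongr f
    rw [← Ideal.Quotient.eq_zero_iff_mem] at hinc ⊢
    exact h1.symm.trans hinc
  · refine Ideal.span_le.2 ?_
    rintro _ (⟨k, i, rfl⟩ | ⟨ρ, γ, rfl⟩) _ ⟨W, rfl⟩
    · simp only [map_sub, map_sum, map_mul, MvPolynomial.eval_X, MvPolynomial.eval_C]
      rw [hrel h lam hlam W k i]
      simp
    · exact DetIdeal.eval_minor _ (hrank W) ρ _
end
end

section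
/- Let r = min_{1 ≤ ℓ ≤ L−1} Σ_i A^ℓ_i, assume r ≤ min{n_0, m, n_L}, and let X ∈ ℝ^{n_0×m} be a dataset whose columns are in general position (every set of min{n_0,m} columns is linearly independent). Let I ⊆ ℂ[y_{kj} : k ∈ [n_L], j ∈ [m]] be the vanishing ideal of the image of θ ↦ M_A(θ)·X. Then the Krull dimension of the quotient ring ℂ[y_{kj}]/I equals min{n_0, m}·r + n_L·r − r². -/
/-!
Set `p = min n₀ m` and let `r` be the width of the narrowest mask.

General position gives a full-rank factorization `X = E * T` with `E` left-invertible and `T`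
right-invertible, through dimension `p` (`exists_rank_factorization`). A masked product factors
through the active neurons of the narrowest layer, and conversely every layer has room for an
`r`-dimensional signal, so the image of the network is exactly the set of products `U * V * T`
with `U` of size `n_L × r` and `V` of size `r × p` (`maskedMatrix_image`).

If the top `r × r` block of `U` is invertible, then `U * V * T = [1; C] * Z * T` for suitable `C`
and `Z`. Such points are dense in the image, so the vanishing ideal is the kernel of the
comorphism of the chart `(Z, C) ↦ [1; C] * Z * T` (`mem_vanishingIdeal_iff_chartHom`), and the
coordinate ring is a subalgebra of `ℂ[Z, C]`. The chart is generically injective: `Z` is visible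
in the top rows, and `C` is recovered from `C * Z` by Cramer's rule. Hence `ℂ[Z, C]` is algebraic
over the coordinate ring (`isAlgebraic_range_chartHom`), whose transcendence degree is therefore
the number of parameters `r * p + (n_L - r) * r`. For a finitely generated domain over a field this
is the Krull dimension (`ringKrullDim_eq_of_trdeg_eq`).
-/

noncomputable section

/-! ### Krull dimension and transcendence degree -/

/-- Going up gives `≤`, incomparability gives `≥`. -/
theorem ringKrullDim_eq_of_isIntegral {R S : Type*} [CommRing R] [CommRing S] [Algebra R S]
    [Algebra.IsIntegral R S] [FaithfulSMul R S] : ringKrullDim R = ringKrullDim S := by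
  refine le_antisymm ?_ ?_
  · refine iSup_le fun l ↦ ?_
    obtain ⟨Q, hQ, hQP⟩ := Ideal.exists_ideal_over_prime_of_isIntegral l.head.asIdeal (⊥ : Ideal S)
      (by
        intro x hx
        have hx0 : algebraMap R S x = 0 := by simpa using hx
        rw [FaithfulSMul.algebraMap_eq_zero_iff] at hx0
        simp [hx0])
    have : Q.IsPrime := hQP.1
    have : Q.LiesOver l.head.asIdeal := ⟨hQP.2.symm⟩
    obtain ⟨L, hL, -⟩ := Ideal.exists_ltSeries_of_hasGoingUp l Q
    rw [← hL]
    exact Order.LTSeries.length_le_krullDim L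
  · exact Order.krullDim_le_of_strictMono (PrimeSpectrum.comap (algebraMap R S))
      fun I J hIJ ↦ Ideal.IsIntegral.comap_lt_comap (R := R) (I := I.asIdeal) (J := J.asIdeal) hIJ

/-- Noether normalization makes `B` integral over a polynomial ring in `s` variables; both the
Krull dimension and the transcendence degree of `B` are then `s`. -/
theorem ringKrullDim_eq_of_trdeg_eq (k : Type) {B : Type} [Field k] [CommRing B] [IsDomain B]
    [Algebra k B] [Algebra.FiniteType k B] {d : ℕ} (hd : Algebra.trdeg k B = d) :
    ringKrullDim B = d := by
  obtain ⟨s, g, hg, hint⟩ := exists_integral_inj_algHom_of_fg k B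
  let _ : Algebra (MvPolynomial (Fin s) k) B := g.toRingHom.toAlgebra
  have : IsScalarTower k (MvPolynomial (Fin s) k) B :=
    IsScalarTower.of_algebraMap_eq fun x ↦ (g.commutes x).symm
  have : Algebra.IsIntegral (MvPolynomial (Fin s) k) B := ⟨hint⟩
  have : FaithfulSMul (MvPolynomial (Fin s) k) B :=
    (faithfulSMul_iff_algebraMap_injective _ _).2 hg
  have h := _root_.trdeg_add_eq k (MvPolynomial (Fin s) k) (A := B)
  rw [_root_.trdeg_eq_zero (R := MvPolynomial (Fin s) k) (A := B), add_zero, MvPolynomial.trdeg_of_isDomain, hd] at h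
  have hs : s = d := by simpa using h
  rw [← ringKrullDim_eq_of_isIntegral (R := MvPolynomial (Fin s) k),
    MvPolynomial.ringKrullDim_of_isNoetherianRing]
  simp [hs]

/-! ### The chart `(Z, C) ↦ [1; C] * Z * T` of the products `U * V * T` -/

section Chart

open Matrix

variable {a b p m ρ : Type} [Fintype a] [Fintype p] [DecidableEq a]

/-- The `ρ × a` matrix whose `a`-rows form the identity and whose `b`-rows form `C`, the rows
being identified with `a ⊕ b` through `e`. -/
def chartL {R : Type*} [CommRing R] (e : a ⊕ b ≃ ρ) (C : Matrix b a R) : Matrix ρ a R :=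
  (fromRows 1 C).submatrix e.symm id

omit [Fintype a] in
theorem chartL_map {R S : Type*} [CommRing R] [CommRing S] (e : a ⊕ b ≃ ρ) (C : Matrix b a R)
    (f : R →+* S) : (chartL e C).map f = chartL e (C.map f) := by
  ext i j
  simp only [chartL, map_apply, submatrix_apply, id]
  rcases e.symm i with x | x <;> simp [Matrix.one_apply, apply_ite f]

/-- Column reduction: a matrix with invertible `a`-block is `[1; C]` times that block. -/
theorem eq_chartL_mul {R : Type*} [CommRing R] (e : a ⊕ b ≃ ρ) (U : Matrix ρ a R)
    (h : IsUnit (U.submatrix (e ∘ Sum.inl) id).det) :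
    U = chartL e (U.submatrix (e ∘ Sum.inr) id * (U.submatrix (e ∘ Sum.inl) id)⁻¹) *
      U.submatrix (e ∘ Sum.inl) id := by
  have : U.submatrix e id = fromRows 1 (U.submatrix (e ∘ Sum.inr) id *
      (U.submatrix (e ∘ Sum.inl) id)⁻¹) * U.submatrix (e ∘ Sum.inl) id := by
    rw [fromRows_mul, Matrix.one_mul, Matrix.mul_assoc, nonsing_inv_mul _ h, Matrix.mul_one]
    ext (i | i) j <;> simp
  have h2 := congrArg (fun M ↦ M.submatrix e.symm id) this
  rw [submatrix_mul _ _ _ id _ Function.bijective_id] at h2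
  simpa [chartL] using h2

/-- The structure map from the real numbers to a complex algebra. -/
def realTo (A : Type*) [CommRing A] [Algebra ℂ A] : ℝ →+* A :=
  (algebraMap ℂ A).comp Complex.ofRealHom

theorem algHom_realTo {A A' : Type*} [CommRing A] [Algebra ℂ A] [CommRing A'] [Algebra ℂ A']
    (φ : A →ₐ[ℂ] A') (t : ℝ) : φ (realTo A t) = realTo A' t := by
  simp [realTo]

/-- A real matrix regarded as a matrix over a complex algebra. -/
def liftMat (A : Type*) [CommRing A] [Algebra ℂ A] {s t : Type*} (M : Matrix s t ℝ) :
    Matrix s t A := M.map (realTo A)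

theorem liftMat_mul (A : Type*) [CommRing A] [Algebra ℂ A] {s t u : Type*} [Fintype t]
    (M : Matrix s t ℝ) (N : Matrix t u ℝ) : liftMat A (M * N) = liftMat A M * liftMat A N :=
  Matrix.map_mul

theorem liftMat_map {A A' : Type*} [CommRing A] [Algebra ℂ A] [CommRing A'] [Algebra ℂ A']
    {s t : Type*} (φ : A →ₐ[ℂ] A') (M : Matrix s t ℝ) :
    (liftMat A M).map φ.toRingHom = liftMat A' M := by
  ext i j
  exact algHom_realTo φ _

/-- The generic `a × p` block. -/
def genZ (a b p : Type) : Matrix a p (MvPolynomial ((a × p) ⊕ (b × a)) ℂ) :=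
  of fun i j ↦ MvPolynomial.X (Sum.inl (i, j))

/-- The generic `b × a` block. -/
def genC (a b p : Type) : Matrix b a (MvPolynomial ((a × p) ⊕ (b × a)) ℂ) :=
  of fun i j ↦ MvPolynomial.X (Sum.inr (i, j))

/-- The generic point `[1; C] * Z * T` of the chart. -/
def genG (e : a ⊕ b ≃ ρ) (T : Matrix p m ℝ) :
    Matrix ρ m (MvPolynomial ((a × p) ⊕ (b × a)) ℂ) :=
  chartL e (genC a b p) * genZ a b p * liftMat (MvPolynomial ((a × p) ⊕ (b × a)) ℂ) T

/-- The comorphism `y ↦ [1; C] * Z * T` of the chart. -/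
def chartHom (e : a ⊕ b ≃ ρ) (T : Matrix p m ℝ) :
    MvPolynomial (ρ × m) ℂ →ₐ[ℂ] MvPolynomial ((a × p) ⊕ (b × a)) ℂ :=
  MvPolynomial.aeval fun q ↦ genG e T q.1 q.2

theorem algHom_aeval_matrix {A : Type*} [CommRing A] [Algebra ℂ A] (φ : A →ₐ[ℂ] ℂ)
    (G : Matrix ρ m A) (f : MvPolynomial (ρ × m) ℂ) :
    φ (MvPolynomial.aeval (fun q ↦ G q.1 q.2) f) =
      MvPolynomial.eval (fun q ↦ (G.map φ.toRingHom) q.1 q.2) f := by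
  rw [MvPolynomial.comp_aeval_apply, MvPolynomial.aeval_eq_eval]
  rfl

theorem eval_chartHom (e : a ⊕ b ≃ ρ) (T : Matrix p m ℝ) (Z : Matrix a p ℂ) (C : Matrix b a ℂ)
    (f : MvPolynomial (ρ × m) ℂ) :
    MvPolynomial.eval (Sum.elim (fun q ↦ Z q.1 q.2) (fun q ↦ C q.1 q.2)) (chartHom e T f) =
      MvPolynomial.eval (fun q ↦ (chartL e C * Z * liftMat ℂ T) q.1 q.2) f := by
  set x := Sum.elim (fun q : a × p ↦ Z q.1 q.2) (fun q : b × a ↦ C q.1 q.2) with hx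
  have hG : (genG e T).map (MvPolynomial.aeval (R := ℂ) x).toRingHom =
      chartL e C * Z * liftMat ℂ T := by
    rw [genG, Matrix.map_mul, Matrix.map_mul, chartL_map]
    rw [liftMat_map]
    congr 2
    · congr 1
      ext i j
      simp [genC, hx]
    · ext i j
      simp [genZ, hx]
  rw [← hG, ← algHom_aeval_matrix, MvPolynomial.aeval_eq_eval]
  rfl

/-- The vanishing ideal of the products `U * V * T` is the kernel of the chart. Real points are
Zariski dense in the parameter space, so a polynomial vanishing on all products is killed by the
chart; conversely the products with invertible `a`-block in `U` lie in the chart, and the others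
are limits of these along a line. -/
theorem mem_vanishingIdeal_iff_chartHom (e : a ⊕ b ≃ ρ) (T : Matrix p m ℝ)
    (f : MvPolynomial (ρ × m) ℂ) :
    f ∈ vanishingIdeal {y : ρ × m → ℝ | ∃ (U : Matrix ρ a ℝ) (V : Matrix a p ℝ),
        y = fun q ↦ (U * V * T) q.1 q.2} ↔ chartHom e T f = 0 := by
  constructor
  · intro hf
    refine MvPolynomial.funext_set (fun _ ↦ Set.range Complex.ofReal)
      (fun _ ↦ Set.infinite_range_of_injective Complex.ofReal_injective) fun x hx ↦ ?_
    have hx' : ∀ i, ∃ t : ℝ, (t : ℂ) = x i := fun i ↦ hx i trivial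
    choose t ht using hx'
    let Z : Matrix a p ℝ := of fun i j ↦ t (Sum.inl (i, j))
    let C : Matrix b a ℝ := of fun i j ↦ t (Sum.inr (i, j))
    have hx : x = Sum.elim (fun q ↦ liftMat ℂ Z q.1 q.2)
        (fun q ↦ liftMat ℂ C q.1 q.2) := by
      funext i
      rcases i with i | i <;> simp [Z, C, ht, realTo, liftMat]
    rw [hx, eval_chartHom, map_zero, liftMat, ← chartL_map, ← liftMat, ← liftMat_mul,
      ← liftMat_mul]
    exact hf _ ⟨chartL e C, Z, rfl⟩
  · rintro hf y ⟨U, V, rfl⟩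
    -- On the line `U + t • [1; 0]` the `a`-block is invertible for all but finitely many `t`,
    -- its determinant being a characteristic polynomial in `t`; so `f` vanishes on that line.
    let UU : Matrix ρ a (Polynomial ℂ) :=
      liftMat (Polynomial ℂ) U + (Polynomial.X : Polynomial ℂ) • chartL e 0
    let G : Matrix ρ m (Polynomial ℂ) := UU * liftMat (Polynomial ℂ) V * liftMat (Polynomial ℂ) T
    let g : Polynomial ℂ := MvPolynomial.aeval (fun q : ρ × m ↦ G q.1 q.2) f
    have hg : ∀ t, g.eval t = MvPolynomial.eval
        (fun q ↦ (UU.map (Polynomial.aeval (R := ℂ) t).toRingHom *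
          liftMat ℂ V * liftMat ℂ T) q.1 q.2) f := by
      intro t
      have hG : G.map (Polynomial.aeval t).toRingHom = UU.map (Polynomial.aeval t).toRingHom *
          liftMat ℂ V * liftMat ℂ T := by
        rw [Matrix.map_mul, Matrix.map_mul, liftMat_map, liftMat_map]
      rw [← hG, ← algHom_aeval_matrix, ← Polynomial.coe_aeval_eq_eval]
    have hdet : (UU.submatrix (e ∘ Sum.inl) id).det ≠ 0 := by
      have : UU.submatrix (e ∘ Sum.inl) id =
          (-((liftMat ℂ U).submatrix (e ∘ Sum.inl) id)).charmatrix := by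
        ext i j
        simp [UU, charmatrix_apply, chartL, diagonal_apply, Matrix.one_apply, add_comm, realTo,
          liftMat]
      rw [this]
      exact (charpoly_monic _).ne_zero
    have hprod : g * (UU.submatrix (e ∘ Sum.inl) id).det = 0 := by
      refine Polynomial.funext fun t ↦ ?_
      rw [Polynomial.eval_mul, Polynomial.eval_zero, mul_eq_zero]
      by_cases h : Polynomial.eval t (UU.submatrix (e ∘ Sum.inl) id).det = 0
      · exact Or.inr h
      left
      have h' : (Polynomial.aeval (R := ℂ) t).toRingHom (UU.submatrix (e ∘ Sum.inl) id).det ≠ 0 :=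
        h
      rw [RingHom.map_det] at h'
      rw [hg, eq_chartL_mul e (UU.map (Polynomial.aeval (R := ℂ) t).toRingHom)
        (isUnit_iff_ne_zero.2 h'), Matrix.mul_assoc (chartL _ _), ← eval_chartHom, hf, map_zero]
    have hg0 := (mul_eq_zero.1 hprod).resolve_right hdet
    have h0 := hg 0
    have h1 : UU.map (Polynomial.aeval (R := ℂ) 0).toRingHom = liftMat ℂ U := by
      ext i j
      simp [UU, realTo, liftMat]
    rw [hg0, Polynomial.eval_zero, h1, ← liftMat_mul, ← liftMat_mul] at h0
    exact h0.symm

/-- The parameters of the chart are algebraic over the coordinates of its image: `Z` is read off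
from the `a`-rows since `T` is right-invertible, and `C` is recovered by Cramer's rule from `C * Z`,
as `Z` has a square block with nonzero determinant. -/
theorem isAlgebraic_range_chartHom [Fintype m] [DecidableEq p] (e : a ⊕ b ≃ ρ)
    (T : Matrix p m ℝ) (T' : Matrix m p ℝ)
    (hT : T * T' = 1) (ι : a → p) (hι : Function.Injective ι) :
    Algebra.IsAlgebraic (chartHom e T (a := a) (b := b)).range
      (MvPolynomial ((a × p) ⊕ (b × a)) ℂ) := by
  set B := (chartHom e T (a := a) (b := b)).range with hB
  have hGB : ∀ i j, genG e T (a := a) (b := b) i j ∈ B := fun i j ↦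
    ⟨MvPolynomial.X (i, j), by simp [chartHom]⟩
  have hY : ∀ i j, (chartL e (genC a b p) * genZ a b p) i j ∈ B := by
    intro i j
    have : chartL e (genC a b p) * genZ a b p = genG e T * liftMat (MvPolynomial ((a × p) ⊕ (b × a)) ℂ) T' := by
      rw [genG, Matrix.mul_assoc, ← liftMat_mul, hT, liftMat,
        Matrix.map_one _ (map_zero _) (map_one _), Matrix.mul_one]
    rw [this, mul_apply]
    exact sum_mem fun k _ ↦ mul_mem (hGB _ _) (B.algebraMap_mem _)
  have hZ : ∀ i j, genZ a b p i j ∈ B := by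
    intro i j
    have := hY (e (Sum.inl i)) j
    simpa [chartL, mul_apply, Matrix.one_apply] using this
  have hCZ : ∀ i j, (genC a b p * genZ a b p) i j ∈ B := by
    intro i j
    have := hY (e (Sum.inr i)) j
    simpa [chartL, mul_apply] using this
  let Zb : Matrix a a B := of fun i j ↦ ⟨genZ a b p i (ι j), hZ _ _⟩
  let Hb : Matrix b a B := of fun i j ↦ ⟨(genC a b p * genZ a b p) i (ι j), hCZ _ _⟩
  have hZb : Zb.map B.val.toRingHom = (genZ a b p).submatrix id ι := rfl
  have hHb : Hb.map B.val.toRingHom = genC a b p * (genZ a b p).submatrix id ι := rfl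
  have hdet : Zb.det ≠ 0 := by
    intro h
    have h1 := congrArg B.val.toRingHom h
    rw [RingHom.map_det, map_zero] at h1
    -- the determinant takes the value `1` where the block is the identity
    have h2 := congrArg (MvPolynomial.eval (Sum.elim
      (fun q : a × p ↦ if ι q.1 = q.2 then (1 : ℂ) else 0) (fun _ : b × a ↦ 0))) h1
    rw [RingHom.map_det, map_zero] at h2
    refine one_ne_zero (α := ℂ) ?_
    rw [← h2, ← det_one (n := a)]
    congr 1
    ext i j
    simp [Zb, genZ, Matrix.one_apply, hι.eq_iff]
  -- Cramer's rule: `C * Z₁ * adj Z₁ = det Z₁ • C`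
  have hC : ∀ i j, (Zb.det : MvPolynomial ((a × p) ⊕ (b × a)) ℂ) * genC a b p i j =
      ((Hb * Zb.adjugate) i j : B) := by
    intro i j
    have h1 : (Hb * Zb.adjugate).map B.val.toRingHom =
        B.val.toRingHom Zb.det • genC a b p := by
      have h0 : (Zb * Zb.adjugate).map B.val.toRingHom = B.val.toRingHom Zb.det • 1 := by
        rw [mul_adjugate]
        ext k l : 2
        by_cases hkl : k = l <;> simp [hkl]
      rw [Matrix.map_mul] at h0
      rw [Matrix.map_mul, hHb, ← hZb, Matrix.mul_assoc, h0, Matrix.mul_smul, Matrix.mul_one]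
    exact (congrFun (congrFun h1 i) j).symm
  have key : ∀ c : MvPolynomial ((a × p) ⊕ (b × a)) ℂ, IsAlgebraic B c := by
    intro c
    induction c using MvPolynomial.induction_on with
    | C z => exact isAlgebraic_algebraMap (⟨MvPolynomial.C z, B.algebraMap_mem z⟩ : B)
    | add x y hx hy => exact hx.add hy
    | mul_X x i hx =>
      refine hx.mul ?_
      rcases i with ⟨i, j⟩ | ⟨i, j⟩
      · exact isAlgebraic_algebraMap (⟨_, hZ i j⟩ : B)
      · refine ⟨Polynomial.C Zb.det * Polynomial.X - Polynomial.C ((Hb * Zb.adjugate) i j), ?_, ?_⟩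
        · intro h
          apply hdet
          simpa using congrArg (fun q ↦ Polynomial.coeff q 1) h
        · simp only [map_sub, map_mul, Polynomial.aeval_C, Polynomial.aeval_X]
          rw [sub_eq_zero]
          exact hC i j
  exact ⟨key⟩

/-- The coordinate ring of the products `U * V * T` embeds in the polynomial ring of the chart
parameters, which is algebraic over it; so its dimension is the number of parameters. -/
theorem ringKrullDim_chart [Fintype m] [Fintype ρ] [Fintype b] [DecidableEq p]
    (e : a ⊕ b ≃ ρ) (T : Matrix p m ℝ) (T' : Matrix m p ℝ)
    (hT : T * T' = 1) (ι : a → p) (hι : Function.Injective ι) :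
    ringKrullDim (MvPolynomial (ρ × m) ℂ ⧸ vanishingIdeal {y : ρ × m → ℝ |
        ∃ (U : Matrix ρ a ℝ) (V : Matrix a p ℝ), y = fun q ↦ (U * V * T) q.1 q.2}) =
      (Fintype.card a * Fintype.card p + Fintype.card b * Fintype.card a : ℕ) := by
  have hI : vanishingIdeal {y : ρ × m → ℝ |
        ∃ (U : Matrix ρ a ℝ) (V : Matrix a p ℝ), y = fun q ↦ (U * V * T) q.1 q.2} =
      RingHom.ker (chartHom e T) := by
    ext f
    rw [mem_vanishingIdeal_iff_chartHom e T, RingHom.mem_ker]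
  rw [hI, ringKrullDim_eq_of_ringEquiv
    (Ideal.quotientKerEquivRange (chartHom e T)).toRingEquiv]
  have := isAlgebraic_range_chartHom e T T' hT ι hι
  have hft : Algebra.FiniteType ℂ (chartHom e T (a := a) (b := b)).range :=
    Algebra.FiniteType.of_surjective (chartHom e T).rangeRestrict
      (chartHom e T).rangeRestrict_surjective
  refine ringKrullDim_eq_of_trdeg_eq ℂ ?_
  have h := _root_.trdeg_add_eq ℂ (chartHom e T (a := a) (b := b)).range
    (A := MvPolynomial ((a × p) ⊕ (b × a)) ℂ)
  rw [_root_.trdeg_eq_zero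
    (R := (chartHom e T (a := a) (b := b)).range) (A := MvPolynomial ((a × p) ⊕ (b × a)) ℂ), add_zero, MvPolynomial.trdeg_of_isDomain] at h
  rw [h]
  simp

end Chart

/-! ### The image of the network map -/

section Network

open Matrix

theorem exists_leftInverse_of_cols {s t : Type} [Fintype s] [Fintype t] [DecidableEq s]
    [DecidableEq t] (M : Matrix s t ℝ) (h : LinearIndependent ℝ M.col) :
    ∃ N : Matrix t s ℝ, N * M = 1 := by
  have hinj : LinearMap.ker M.mulVecLin = ⊥ :=
    LinearMap.ker_eq_bot.2 (mulVec_injective_iff.2 h)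
  obtain ⟨g, hg⟩ := LinearMap.exists_leftInverse_of_injective M.mulVecLin hinj
  refine ⟨LinearMap.toMatrix' g, ?_⟩
  have := congrArg LinearMap.toMatrix' hg
  rw [LinearMap.toMatrix'_comp, LinearMap.toMatrix'_id, ← toLin'_apply',
    LinearMap.toMatrix'_toLin'] at this
  exact this

/-- General position provides a full-rank factorization `X = E * T` through dimension
`min n₀ m`: one of the factors is `X` itself and the other is the identity. -/
theorem exists_rank_factorization {n₀ m : ℕ} (X : Matrix (Fin n₀) (Fin m) ℝ)
    (hgen : ∀ s : Finset (Fin m), s.card = min n₀ m →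
      LinearIndependent ℝ (fun j : s => fun a => X a j.1)) :
    ∃ (E : Matrix (Fin n₀) (Fin (min n₀ m)) ℝ) (E' : Matrix (Fin (min n₀ m)) (Fin n₀) ℝ)
      (T : Matrix (Fin (min n₀ m)) (Fin m) ℝ) (T' : Matrix (Fin m) (Fin (min n₀ m)) ℝ),
      X = E * T ∧ E' * E = 1 ∧ T * T' = 1 := by
  obtain ⟨p, hp⟩ : ∃ p, p = min n₀ m := ⟨_, rfl⟩
  rw [← hp] at hgen ⊢
  obtain ⟨s, -, hs⟩ := Finset.exists_subset_card_eq (s := (Finset.univ : Finset (Fin m)))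
    (n := p) (by simp [hp])
  have hli := hgen s hs
  let f : Fin p ≃ s := (s.equivFinOfCardEq hs).symm
  have hli' : LinearIndependent ℝ (X.submatrix id fun j ↦ (f j : Fin m)).col :=
    hli.comp f f.injective
  obtain ⟨N, hN⟩ := exists_leftInverse_of_cols _ hli'
  rcases le_total m n₀ with h | h
  · obtain rfl : p = m := by omega
    have hu : s = Finset.univ := Finset.eq_univ_of_card _ (by simpa using hs)
    subst hu
    have hX : LinearIndependent ℝ X.col := by
      have := hli.comp (fun j : Fin p ↦ ⟨j, Finset.mem_univ j⟩) fun i j hij ↦ by simpa using hij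
      exact this
    obtain ⟨E', hE'⟩ := exists_leftInverse_of_cols X hX
    exact ⟨X, E', 1, 1, by simp, hE', by simp⟩
  · obtain rfl : p = n₀ := by omega
    -- The right inverse of `X` inverts the square block of columns in `s` and ignores the others.
    refine ⟨1, 1, X, (1 : Matrix (Fin m) (Fin m) ℝ).submatrix id (fun j ↦ (f j : Fin m)) * N,
      by simp, by simp, ?_⟩
    rw [← Matrix.mul_assoc]
    have : X * (1 : Matrix (Fin m) (Fin m) ℝ).submatrix id (fun j ↦ (f j : Fin m)) =
        X.submatrix id fun j ↦ (f j : Fin m) := by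
      ext i j
      simp [mul_apply, Matrix.one_apply]
    rw [this]
    exact mul_eq_one_comm.1 hN

/-- The mask of layer `ℓ` factors through the space of its active neurons. -/
theorem maskMat_factor (n : ℕ → ℕ) (A : (ℓ : ℕ) → Fin (n ℓ) → Bool) (ℓ : ℕ) :
    ∃ (J : Matrix (Fin (n ℓ)) (Fin (activeCard n A ℓ)) ℝ)
      (J' : Matrix (Fin (activeCard n A ℓ)) (Fin (n ℓ)) ℝ), maskMat n A ℓ = J * J' := by
  let s := Finset.univ.filter fun i : Fin (n ℓ) => A ℓ i = true
  let f : s ≃ Fin (activeCard n A ℓ) := s.equivFinOfCardEq rfl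
  refine ⟨of fun i j ↦ if i = (f.symm j : Fin (n ℓ)) then 1 else 0,
    of fun j i ↦ if i = (f.symm j : Fin (n ℓ)) then 1 else 0, ?_⟩
  ext i k
  simp only [maskMat, mul_apply, of_apply]
  rw [f.symm.sum_comp (fun x : s ↦ (if i = (x : Fin (n ℓ)) then (1 : ℝ) else 0) *
    if k = (x : Fin (n ℓ)) then 1 else 0)]
  rw [Finset.sum_coe_sort s (fun x ↦ (if i = x then (1 : ℝ) else 0) * if k = x then 1 else 0)]
  by_cases hik : i = k
  · subst hik
    simp [s]
  · rw [diagonal_apply_ne _ hik]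
    refine (Finset.sum_eq_zero fun x _ ↦ ?_).symm
    by_cases hi : i = x
    · subst hi
      simp [Ne.symm hik]
    · simp [hi]

/-- A layer with at least `r` active neurons lets an `r`-dimensional signal through unchanged. -/
theorem exists_through_mask (n : ℕ → ℕ) (A : (ℓ : ℕ) → Fin (n ℓ) → Bool) (ℓ r : ℕ)
    (h : r ≤ activeCard n A ℓ) :
    ∃ (J : Matrix (Fin (n ℓ)) (Fin r) ℝ) (J' : Matrix (Fin r) (Fin (n ℓ)) ℝ),
      maskMat n A ℓ * J = J ∧ J' * J = 1 := by
  let s := Finset.univ.filter fun i : Fin (n ℓ) => A ℓ i = true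
  let f : s ≃ Fin (activeCard n A ℓ) := s.equivFinOfCardEq rfl
  let g : Fin r → Fin (n ℓ) := fun j ↦ (f.symm (Fin.castLE h j) : Fin (n ℓ))
  have hg : Function.Injective g := Subtype.val_injective.comp
    (f.symm.injective.comp (Fin.castLE_injective h))
  have hA : ∀ j, A ℓ (g j) = true := fun j ↦
    (Finset.mem_filter.1 (f.symm (Fin.castLE h j)).2).2
  refine ⟨(1 : Matrix (Fin (n ℓ)) (Fin (n ℓ)) ℝ).submatrix id g,
    (1 : Matrix (Fin (n ℓ)) (Fin (n ℓ)) ℝ).submatrix g id, ?_, ?_⟩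
  · ext i j
    rw [maskMat, diagonal_mul]
    by_cases hi : i = g j
    · simp [hi, hA]
    · simp [hi]
  · ext i j
    simp [mul_apply, Matrix.one_apply, hg.eq_iff]

/-- From layer `ℓ` on, the signal factors through the mask of layer `ℓ`. -/
theorem preM_factor (n : ℕ → ℕ) (A : (ℓ : ℕ) → Fin (n ℓ) → Bool)
    (W : (ℓ : ℕ) → Matrix (Fin (n (ℓ + 1))) (Fin (n ℓ)) ℝ) {ℓ k : ℕ} (hℓ : 1 ≤ ℓ) (hk : ℓ ≤ k) :
    ∃ (P : Matrix (Fin (n k)) (Fin (n ℓ)) ℝ) (Q : Matrix (Fin (n ℓ)) (Fin (n 0)) ℝ),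
      preM n A W k = P * (maskMat n A ℓ * Q) := by
  induction k, hk using Nat.le_induction with
  | base =>
    obtain ⟨l, rfl⟩ := Nat.exists_eq_add_of_le' hℓ
    exact ⟨1, W l * preM n A W l, by rw [Matrix.one_mul, preM]⟩
  | succ k hk ih =>
    obtain ⟨P, Q, h⟩ := ih
    exact ⟨maskMat n A (k + 1) * (W k * P), Q, by
      rw [preM, h]; simp only [Matrix.mul_assoc]⟩

/-- The image of the network on the data `E * T`, with `E` left-invertible, is the set of all
products `U * V * T` with inner dimension `r`, the width of the narrowest masked layer. -/
theorem maskedMatrix_image (n : ℕ → ℕ) (K : ℕ) (hK : 1 ≤ K)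
    (A : (ℓ : ℕ) → Fin (n ℓ) → Bool) (r : ℕ)
    (hr : IsLeast ((fun ℓ => activeCard n A ℓ) '' Set.Icc 1 K) r)
    {m p : ℕ} (E : Matrix (Fin (n 0)) (Fin p) ℝ) (E' : Matrix (Fin p) (Fin (n 0)) ℝ)
    (hE : E' * E = 1) (T : Matrix (Fin p) (Fin m) ℝ) :
    {y : Fin (n (K + 1)) × Fin m → ℝ |
      ∃ W : (ℓ : ℕ) → Matrix (Fin (n (ℓ + 1))) (Fin (n ℓ)) ℝ,
        y = fun q => (maskedMatrix n A W (K + 1) * (E * T)) q.1 q.2} =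
    {y : Fin (n (K + 1)) × Fin m → ℝ |
      ∃ (U : Matrix (Fin (n (K + 1))) (Fin r) ℝ) (V : Matrix (Fin r) (Fin p) ℝ),
        y = fun q ↦ (U * V * T) q.1 q.2} := by
  apply Set.Subset.antisymm
  · rintro y ⟨W, rfl⟩
    obtain ⟨ℓ, hℓ, rfl⟩ := hr.1
    obtain ⟨P, Q, hPQ⟩ := preM_factor n A W hℓ.1 hℓ.2
    obtain ⟨J, J', hJ⟩ := maskMat_factor n A ℓ
    refine ⟨W K * (P * J), J' * (Q * E), ?_⟩
    rw [maskedMatrix, hPQ, hJ]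
    simp only [Matrix.mul_assoc]
  · rintro y ⟨U, V, rfl⟩
    have hJ : ∀ ℓ, ∃ (J : Matrix (Fin (n ℓ)) (Fin r) ℝ) (J' : Matrix (Fin r) (Fin (n ℓ)) ℝ),
        1 ≤ ℓ → ℓ ≤ K → maskMat n A ℓ * J = J ∧ J' * J = 1 := by
      intro ℓ
      by_cases h : ℓ ∈ Set.Icc 1 K
      · obtain ⟨J, J', h'⟩ := exists_through_mask n A ℓ r (hr.2 ⟨ℓ, h, rfl⟩)
        exact ⟨J, J', fun _ _ ↦ h'⟩
      · exact ⟨0, 0, fun h1 h2 ↦ (h ⟨h1, h2⟩).elim⟩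
    choose J J' hJ using hJ
    -- The signal `V * E'` enters layer `1` through `J 1`, is carried from `J l` to `J (l + 1)`,
    -- and leaves the last hidden layer through `U`.
    let H : (ℓ : ℕ) → Matrix (Fin (n ℓ)) (Fin r) ℝ := Function.update J (K + 1) U
    have hH : ∀ ℓ, ℓ ≤ K → H ℓ = J ℓ := fun ℓ h ↦ Function.update_of_ne (by omega) _ _
    let W : (ℓ : ℕ) → Matrix (Fin (n (ℓ + 1))) (Fin (n ℓ)) ℝ := fun ℓ ↦
      match ℓ with
      | 0 => H 1 * (V * E')
      | l + 1 => H (l + 2) * J' (l + 1)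
    have hpre : ∀ ℓ, 1 ≤ ℓ → ℓ ≤ K → preM n A W ℓ = J ℓ * (V * E') := by
      intro ℓ h1
      induction ℓ, h1 using Nat.le_induction with
      | base =>
        intro h
        have : W 0 = J 1 * (V * E') := by rw [← hH 1 h]
        rw [preM, preM, Matrix.mul_one, this, ← Matrix.mul_assoc, (hJ 1 le_rfl h).1]
      | succ l hl ih =>
        intro h
        obtain ⟨k, rfl⟩ := Nat.exists_eq_add_of_le' hl
        have : W (k + 1) = J (k + 2) * J' (k + 1) := by rw [← hH (k + 2) h]
        rw [preM, ih (by omega), this, Matrix.mul_assoc (J (k + 2)), ← Matrix.mul_assoc (J' (k + 1)),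
          (hJ (k + 1) hl (by omega)).2, Matrix.one_mul, ← Matrix.mul_assoc,
          (hJ (k + 2) (by omega) h).1]
    refine ⟨W, ?_⟩
    obtain ⟨k, rfl⟩ := Nat.exists_eq_add_of_le' hK
    have hW : W (k + 1) = U * J' (k + 1) := by
      have : H (k + 2) = U := Function.update_self _ _ _
      rw [← this]
    have : maskedMatrix n A W (k + 1 + 1) * (E * T) = U * V * T := by
      rw [maskedMatrix, hpre (k + 1) hK le_rfl, hW, Matrix.mul_assoc U,
        ← Matrix.mul_assoc (J' (k + 1)), (hJ (k + 1) hK le_rfl).2, Matrix.one_mul,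
        Matrix.mul_assoc U, Matrix.mul_assoc V, ← Matrix.mul_assoc E', hE, Matrix.one_mul,
        Matrix.mul_assoc]
    rw [this]

end Network

/-- With `L = K + 1 ≥ 2`, `r = min_{1 ≤ ℓ ≤ L-1} Σ_i A^ℓ_i ≤ min{n_0, m, n_L}`
and a dataset `X` in general position, the Krull dimension of the coordinate ring of
the ReLU output variety (the quotient by the vanishing ideal of the image of
`θ ↦ M_A(θ)·X`) equals `min{n_0, m}·r + n_L·r − r²`. -/
theorem statement5 (n : ℕ → ℕ) (K : ℕ) (hK : 1 ≤ K)
    (A : (ℓ : ℕ) → Fin (n ℓ) → Bool) (r : ℕ)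
    (hr : IsLeast ((fun ℓ => activeCard n A ℓ) '' Set.Icc 1 K) r)
    (m : ℕ) (hrle : r ≤ min (n 0) (min m (n (K + 1))))
    (X : Matrix (Fin (n 0)) (Fin m) ℝ)
    (hgen : ∀ s : Finset (Fin m), s.card = min (n 0) m →
      LinearIndependent ℝ (fun j : s => fun a => X a j.1)) :
    ringKrullDim (MvPolynomial (Fin (n (K + 1)) × Fin m) ℂ ⧸
        vanishingIdeal {y : Fin (n (K + 1)) × Fin m → ℝ |
          ∃ W : (ℓ : ℕ) → Matrix (Fin (n (ℓ + 1))) (Fin (n ℓ)) ℝ,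
            y = fun q => (maskedMatrix n A W (K + 1) * X) q.1 q.2}) =
      (min (n 0) m * r + n (K + 1) * r - r ^ 2 : ℕ) := by
  obtain ⟨E, E', T, T', rfl, hE, hT⟩ := exists_rank_factorization X hgen
  rw [maskedMatrix_image n K hK A r hr E E' hE T]
  have hrp : r ≤ min (n 0) m := by omega
  have hrN : r ≤ n (K + 1) := by omega
  let e : Fin r ⊕ Fin (n (K + 1) - r) ≃ Fin (n (K + 1)) :=
    finSumFinEquiv.trans (finCongr (by omega))
  rw [ringKrullDim_chart e T T' hT (Fin.castLE hrp) (Fin.castLE_injective hrp)]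
  simp only [Fintype.card_fin]
  obtain ⟨c, hc⟩ := Nat.exists_eq_add_of_le hrN
  have : r * min (n 0) m + (n (K + 1) - r) * r =
      min (n 0) m * r + n (K + 1) * r - r ^ 2 := by
    rw [hc, Nat.add_sub_cancel_left]
    apply Nat.eq_sub_of_add_eq
    ring
  rw [this]
end
end

section
/- Let r = min_{1 ≤ ℓ ≤ L−1} Σ_i A^ℓ_i and let X ∈ ℝ^{n_0×m} have columns x^(1),…,x^(m) in affine general position (if m ≤ n_0+1 the vectors (1,x^(j)) ∈ ℝ^{n_0+1} are linearly independent; if m > n_0+1 every n_0+1 of the vectors (1,x^(j)) are linearly independent). Let I ⊆ ℂ[y_{kj} : k ∈ [n_L], j ∈ [m]] be the vanishing ideal of the image of θ ↦ F^A_X(θ) = [f^A_θ(x^(1)), …, f^A_θ(x^(m))]. (i) If m ≤ n_0+1, then I is generated by all (r+2)×(r+2) minors of the (n_L+1)×m matrix obtained by appending to the generic matrix Y = (y_{kj}) a top row all of whose entries are 1. (ii) If m > n_0+1, write the unique relations (1, x^(i)) = Σ_{j=m−n_0}^{m} λ_{ij}(1, x^(j)) for i ∈ [m−n_0−1]; then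 I is generated by the n_L(m−n_0−1) linear forms y_{ki} − Σ_{j=m−n_0}^{m} λ_{ij} y_{kj} together with all (r+2)×(r+2) minors of the (n_L+1)×(n_0+1) matrix whose top row is all ones and whose remaining rows are the last n_0+1 columns of Y. -/
/-!
**The image.** The network computes an affine map of its input whose linear part factors through
the `r` active neurons of the narrowest hidden layer; conversely every affine map with linear part
of rank at most `r` is realised (`exists_factor_of_params`, `exists_params_of_factor`). Affine
functions take arbitrary values at affinely independent points, so for at most `n_0 + 1` data
points the image consists exactly of the matrices `c 1ᵀ + P Z` of inner dimension `r`, that is, of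
those which become a product of inner dimension `r + 1` after a top row of ones is appended.

**The core.** Over `ℂ`, a polynomial vanishing at all real products `U V` of inner dimension `r + 1`
lies in the ideal of `(r + 2)`-minors of the generic matrix (`mem_minorIdeal`). Call two positions
`NE`-related if one lies strictly above and to the right of the other, and an exponent vector good
if its support can be coloured with `r + 1` colours, each free of `NE`-related pairs; as in
Dilworth's theorem, an exponent whose support has no `NE`-chain of length `r + 2` is good.
Expanding the minor on a chain and comparing weights `∑ (i + 1) (j + 1)` (rearrangement inequality)
shows that modulo minors every monomial is a combination of good ones (`mem_sup`). Good monomials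
stay linearly independent after substituting `y = U V` (`eq_zero_of_mulPullback_eq_zero`): a good
exponent is a sum of `r + 1` arrays whose supports have no `NE`-related pair, and such an array
maximises all tail sums among arrays with the same margins (`tail_le_of_margins`). Hence, in a
combination of good monomials, the exponent of least weight contributes a term to the pull-back
which no other exponent produces; its coefficient is a product of multinomial coefficients,
nonzero in characteristic `0`.

**The affine case.** A polynomial vanishing on the image is homogenized column by column with the
top row; the result vanishes at all products of inner dimension `r + 1` and so lies in the ideal of
minors, and setting the top row to `1` gives (i) (`mem_span_augMinors`). For (ii), the linear forms
vanish on the image because affine maps respect affine relations, and modulo them every polynomial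
depends only on the last `n_0 + 1` columns, where (i) applies.
-/

noncomputable section

def hiddenVec (n : ℕ → ℕ) (A : (ℓ : ℕ) → Fin (n ℓ) → Bool)
    (W : (ℓ : ℕ) → Matrix (Fin (n (ℓ + 1))) (Fin (n ℓ)) ℝ)
    (b : (ℓ : ℕ) → Fin (n (ℓ + 1)) → ℝ) (x : Fin (n 0) → ℝ) :
    (ℓ : ℕ) → Fin (n ℓ) → ℝ
  | 0 => x
  | ℓ + 1 => (maskMat n A (ℓ + 1)).mulVec ((W ℓ).mulVec (hiddenVec n A W b x ℓ) + b ℓ)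

/-- The masked output `f^A_θ(x)` of an `L`-layer ReLU network with biases. -/
def maskedOutput (n : ℕ → ℕ) (A : (ℓ : ℕ) → Fin (n ℓ) → Bool)
    (W : (ℓ : ℕ) → Matrix (Fin (n (ℓ + 1))) (Fin (n ℓ)) ℝ)
    (b : (ℓ : ℕ) → Fin (n (ℓ + 1)) → ℝ) (x : Fin (n 0) → ℝ) :
    (L : ℕ) → Fin (n L) → ℝ
  | 0 => x
  | L + 1 => (W L).mulVec (hiddenVec n A W b x L) + b L

/-! ### Northwest-corner arrays and weights -/

/-- `x` lies strictly above and strictly to the right of `y` in a matrix. -/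
def NE {p q : ℕ} (x y : Fin p × Fin q) : Prop := x.1 < y.1 ∧ y.2 < x.2

theorem NE.trans {p q : ℕ} {x y z : Fin p × Fin q} (h : NE x y) (h' : NE y z) : NE x z :=
  ⟨h.1.trans h'.1, h'.2.trans h.2⟩

/-- A finite set of positions without an `NE`-chain of length `s + 1` splits into `s` classes
without `NE`-related pairs: the class of a position records the length of the longest chain
ending there. -/
theorem coloring_or_chain {p q : ℕ} (s : ℕ) : ∀ S : Finset (Fin p × Fin q),
    (∃ c : Fin p × Fin q → ℕ, (∀ x ∈ S, c x < s) ∧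
      ∀ x ∈ S, ∀ y ∈ S, c x = c y → ¬ NE x y) ∨
    ∃ f : Fin (s + 1) → Fin p × Fin q, (∀ a, f a ∈ S) ∧ ∀ a b, a < b → NE (f a) (f b) := by
  induction s with
  | zero =>
    intro S
    rcases S.eq_empty_or_nonempty with rfl | ⟨x, hx⟩
    · left; exact ⟨fun _ => 0, by simp, by simp⟩
    · right
      refine ⟨fun _ => x, fun _ => hx, fun a b hab => ?_⟩
      omega
  | succ s ih =>
    intro S
    classical
    rcases ih (S.filter fun x => ∃ z ∈ S, NE z x) with ⟨c, hc, hc'⟩ | ⟨f, hf, hf'⟩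
    · left
      refine ⟨fun x => if x ∈ S.filter (fun x => ∃ z ∈ S, NE z x) then c x else s, ?_, ?_⟩
      · intro x _
        dsimp only
        split_ifs with h
        · exact (hc x h).trans (Nat.lt_succ_self s)
        · exact Nat.lt_succ_self s
      · intro x hx y hy hxy hne
        have hyS : y ∈ S.filter (fun x => ∃ z ∈ S, NE z x) :=
          Finset.mem_filter.2 ⟨hy, x, hx, hne⟩
        dsimp only at hxy
        rw [if_pos hyS] at hxy
        split_ifs at hxy with h
        · exact hc' x h y hyS hxy hne
        · exact absurd (hc y hyS) (by omega)
    · right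
      obtain ⟨z, hz, hzf⟩ := (Finset.mem_filter.1 (hf 0)).2
      refine ⟨Fin.cons z f, ?_, ?_⟩
      · intro a
        refine Fin.cases ?_ (fun a => ?_) a
        · simpa using hz
        · simpa using (Finset.mem_filter.1 (hf a)).1
      · intro a b hab
        induction b using Fin.cases with
        | zero => exact absurd hab (Fin.not_lt_zero a)
        | succ b =>
          induction a using Fin.cases with
          | zero =>
            simp only [Fin.cons_zero, Fin.cons_succ]
            rcases eq_or_ne b 0 with rfl | hb
            · exact hzf
            · exact hzf.trans (hf' 0 b (Fin.pos_of_ne_zero hb))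
          | succ a =>
            simpa using hf' a b (by simpa using hab)

/-- An exponent vector is *good* if its support can be coloured with `s` colours so that no two
positions of the same colour are `NE`-related. -/
def IsGood {p q : ℕ} (s : ℕ) (e : Fin p × Fin q →₀ ℕ) : Prop :=
  ∃ c : Fin p × Fin q → Fin s, ∀ x y, e x ≠ 0 → e y ≠ 0 → c x = c y → ¬ NE x y

theorem isGood_or_chain {p q : ℕ} (r : ℕ) (e : Fin p × Fin q →₀ ℕ) :
    IsGood (r + 1) e ∨
    ∃ f : Fin (r + 2) → Fin p × Fin q, (∀ a, e (f a) ≠ 0) ∧ ∀ a b, a < b → NE (f a) (f b) := by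
  rcases coloring_or_chain (r + 1) e.support with ⟨c, hc, hc'⟩ | ⟨f, hf, hchain⟩
  · left
    refine ⟨fun x => Fin.ofNat (r + 1) (c x), fun x y hx hy hxy => ?_⟩
    have hx' := Finsupp.mem_support_iff.2 hx
    have hy' := Finsupp.mem_support_iff.2 hy
    refine hc' x hx' y hy' ?_
    have := congrArg Fin.val hxy
    simpa [Nat.mod_eq_of_lt (hc x hx'), Nat.mod_eq_of_lt (hc y hy')] using this
  · right
    exact ⟨f, fun a => Finsupp.mem_support_iff.1 (hf a), hchain⟩

/-- The sum of the entries of `G` weakly below and weakly to the right of `x`. -/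
def tail {p q : ℕ} (G : Fin p × Fin q → ℕ) (x : Fin p × Fin q) : ℕ :=
  ∑ y, if x ≤ y then G y else 0

/-- The weight `∑ G (i, j) (i + 1) (j + 1)`, with rows and columns numbered from `0`. -/
def wt {p q : ℕ} (G : Fin p × Fin q → ℕ) : ℕ :=
  ∑ y, G y * ((y.1.1 + 1) * (y.2.1 + 1))

theorem wt_eq_sum_tail {p q : ℕ} (G : Fin p × Fin q → ℕ) : wt G = ∑ x, tail G x := by
  unfold wt tail
  rw [Finset.sum_comm]
  refine Finset.sum_congr rfl fun y _ => ?_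
  rw [← Finset.sum_filter, Finset.sum_const, smul_eq_mul, mul_comm]
  congr 1
  have : (Finset.univ.filter fun x : Fin p × Fin q => x ≤ y) = Finset.Iic y := by
    ext x; simp
  rw [this, ← Prod.mk.eta (p := y), ← Finset.Iic_product_Iic, Finset.card_product]
  simp

/-- Möbius inversion in qualitative form: the tail sums determine the array. -/
theorem tail_injective {p q : ℕ} {G H : Fin p × Fin q → ℕ} (h : tail G = tail H) : G = H := by
  classical
  by_contra hne
  have hS : (Finset.univ.filter fun x => G x ≠ H x).Nonempty := by
    obtain ⟨x, hx⟩ := Function.ne_iff.1 hne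
    exact ⟨x, by simpa using hx⟩
  obtain ⟨x, hx⟩ := Finset.exists_maximal hS
  have hxne : G x ≠ H x := by simpa using hx.1
  have key := congrFun h x
  unfold tail at key
  rw [← Finset.add_sum_erase _ _ (Finset.mem_univ x),
    ← Finset.add_sum_erase (a := x) (s := Finset.univ) _ (Finset.mem_univ x)] at key
  have : ∑ y ∈ Finset.univ.erase x, (if x ≤ y then G y else 0) =
      ∑ y ∈ Finset.univ.erase x, (if x ≤ y then H y else 0) := by
    refine Finset.sum_congr rfl fun y hy => ?_
    split_ifs with hxy
    · by_contra hy'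
      have := hx.2 (y := y) (by simpa using hy') hxy
      exact (Finset.ne_of_mem_erase hy) (le_antisymm this hxy)
    · rfl
  rw [this] at key
  simp at key
  exact hxne key

/-- Among all arrays with given margins, an array whose support has no `NE`-related pair
(a northwest-corner array) has the largest tail sums. -/
theorem tail_le_of_margins {p q : ℕ} {E F : Fin p × Fin q → ℕ}
    (hE : ∀ x y, E x ≠ 0 → E y ≠ 0 → ¬ NE x y)
    (hrow : ∀ i, ∑ j, F (i, j) = ∑ j, E (i, j)) (hcol : ∀ j, ∑ i, F (i, j) = ∑ i, E (i, j))
    (z : Fin p × Fin q) : tail F z ≤ tail E z := by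
  -- Either `E` vanishes in the rows `≥ z.1` left of column `z.2`, so that `tail E z` is a sum
  -- of full row sums, or it vanishes in the columns `≥ z.2` above row `z.1`.
  by_cases h : ∀ x, z.1 ≤ x.1 → x.2 < z.2 → E x = 0
  · have h1 : tail E z = ∑ i, if z.1 ≤ i then ∑ j, E (i, j) else 0 := by
      unfold tail
      rw [Fintype.sum_prod_type]
      refine Finset.sum_congr rfl fun i _ => ?_
      split_ifs with hi
      · refine Finset.sum_congr rfl fun j _ => ?_
        split_ifs with hj
        · rfl
        · refine (h _ hi ?_).symm
          by_contra hj'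
          exact hj ⟨hi, not_lt.1 hj'⟩
      · exact Finset.sum_eq_zero fun j _ => if_neg fun hh => hi hh.1
    rw [h1]
    unfold tail
    rw [Fintype.sum_prod_type]
    refine Finset.sum_le_sum fun i _ => ?_
    split_ifs with hi
    · rw [← hrow]
      exact Finset.sum_le_sum fun j _ => by split_ifs <;> simp
    · exact (Finset.sum_eq_zero fun j _ => if_neg fun hh => hi hh.1).le
  · push Not at h
    obtain ⟨x, hx1, hx2, hx⟩ := h
    have h : ∀ y, y.1 < z.1 → z.2 ≤ y.2 → E y = 0 := by
      intro y hy1 hy2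
      by_contra hy
      exact hE y x hy hx ⟨hy1.trans_le hx1, hx2.trans_le hy2⟩
    have h1 : tail E z = ∑ j, if z.2 ≤ j then ∑ i, E (i, j) else 0 := by
      unfold tail
      rw [Fintype.sum_prod_type_right]
      refine Finset.sum_congr rfl fun j _ => ?_
      split_ifs with hj
      · refine Finset.sum_congr rfl fun i _ => ?_
        split_ifs with hi
        · rfl
        · refine (h _ ?_ hj).symm
          by_contra hi'
          exact hi ⟨not_lt.1 hi', hj⟩
      · exact Finset.sum_eq_zero fun j _ => if_neg fun hh => hj hh.2
    rw [h1]
    unfold tail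
    rw [Fintype.sum_prod_type_right]
    refine Finset.sum_le_sum fun j _ => ?_
    split_ifs with hj
    · rw [← hcol]
      exact Finset.sum_le_sum fun j _ => by split_ifs <;> simp
    · exact (Finset.sum_eq_zero fun j _ => if_neg fun hh => hj hh.2).le

/-- Permuting the column partners of an `NE`-chain non-trivially increases the weight
(the rearrangement inequality). -/
theorem chain_weight_lt {p q s : ℕ} {f : Fin s → Fin p × Fin q}
    (hf : ∀ a b, a < b → NE (f a) (f b)) {τ : Equiv.Perm (Fin s)} (hτ : τ ≠ 1) :
    ∑ a, (((f a).1.1 + 1) * ((f a).2.1 + 1)) <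
      ∑ a, (((f (τ a)).1.1 + 1) * ((f a).2.1 + 1)) := by
  set g : Fin s → ℕ := fun a => (f a).1.1 + 1
  set k : Fin s → ℕ := fun a => (f a).2.1 + 1
  have hg : StrictMono g := fun a b hab => Nat.succ_lt_succ (hf a b hab).1
  have hk : StrictAnti k := fun a b hab => Nat.succ_lt_succ (hf a b hab).2
  refine (Antivary.sum_mul_lt_sum_comp_perm_mul_iff (σ := τ) (f := g) (g := k)
    (hg.monotone.antivary hk.antitone)).2 fun h => hτ ?_
  refine (Equiv.Perm.monotone_iff τ).1 ?_
  intro a b hab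
  rcases hab.eq_or_lt with rfl | hab
  · exact le_rfl
  · exact hg.le_iff_le.1 (h (hk hab))

/-! ### Pull-back of monomials along matrix multiplication -/

/-- The pull-back of polynomials along `(U, V) ↦ U * V`, where `U` is `p × s` and `V` is
`s × q`. -/
def mulPullback (R : Type*) [CommSemiring R] (p q s : ℕ) :
    MvPolynomial (Fin p × Fin q) R →ₐ[R] MvPolynomial (Fin p × Fin s ⊕ Fin s × Fin q) R :=
  MvPolynomial.aeval fun x =>
    ∑ k, MvPolynomial.X (Sum.inl (x.1, k)) * MvPolynomial.X (Sum.inr (k, x.2))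

/-- `E` decomposes the exponent vector `e` into `s` arrays, whose row and column sums are
recorded by `γ`. -/
def IsDecomposition {p q s : ℕ} (E : Fin s → Fin p × Fin q → ℕ) (e : Fin p × Fin q →₀ ℕ)
    (γ : (Fin p × Fin s ⊕ Fin s × Fin q) →₀ ℕ) : Prop :=
  (∀ x, e x = ∑ k, E k x) ∧ (∀ i k, γ (Sum.inl (i, k)) = ∑ j, E k (i, j)) ∧
    ∀ k j, γ (Sum.inr (k, j)) = ∑ i, E k (i, j)

/-- Every exponent occurring in the pull-back of `y ^ e` comes from choosing one of the `s`
summands of `(U * V) x` in each factor `y x`. -/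
theorem exists_decomposition {R : Type*} [CommSemiring R] {p q s : ℕ}
    (e : Fin p × Fin q →₀ ℕ) : ∀ γ : (Fin p × Fin s ⊕ Fin s × Fin q) →₀ ℕ,
    γ ∈ (mulPullback R p q s (MvPolynomial.monomial e 1)).support →
    ∃ E, IsDecomposition E e γ := by
  classical
  have hadd : ∀ e f : Fin p × Fin q →₀ ℕ,
      (∀ γ ∈ (mulPullback R p q s (MvPolynomial.monomial e 1)).support,
        ∃ E, IsDecomposition E e γ) →
      (∀ γ ∈ (mulPullback R p q s (MvPolynomial.monomial f 1)).support,
        ∃ E, IsDecomposition E f γ) →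
      ∀ γ ∈ (mulPullback R p q s (MvPolynomial.monomial (e + f) 1)).support,
        ∃ E, IsDecomposition E (e + f) γ := by
    intro e f he hf γ hγ
    have hm : (MvPolynomial.monomial (e + f) (1 : R)) =
        MvPolynomial.monomial e 1 * MvPolynomial.monomial f 1 := by
      rw [MvPolynomial.monomial_mul, one_mul]
    rw [hm, map_mul] at hγ
    obtain ⟨γ₁, h₁, γ₂, h₂, rfl⟩ := Finset.mem_add.1 (MvPolynomial.support_mul _ _ hγ)
    obtain ⟨E, hE1, hE2, hE3⟩ := he γ₁ h₁
    obtain ⟨F, hF1, hF2, hF3⟩ := hf γ₂ h₂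
    refine ⟨fun k x => E k x + F k x, ?_, ?_, ?_⟩
    · intro x; simp [hE1, hF1, Finset.sum_add_distrib]
    · intro i k; simp [hE2, hF2, Finset.sum_add_distrib]
    · intro k j; simp [hE3, hF3, Finset.sum_add_distrib]
  have hzero : ∀ γ ∈ (mulPullback R p q s (MvPolynomial.monomial 0 1)).support,
      ∃ E, IsDecomposition E 0 γ := by
    intro γ hγ
    have h1 : (MvPolynomial.monomial (0 : Fin p × Fin q →₀ ℕ) (1 : R)) = 1 := rfl
    rw [h1, map_one, MvPolynomial.mem_support_iff, MvPolynomial.coeff_one] at hγ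
    have : γ = 0 := by
      by_contra h
      exact hγ (if_neg (Ne.symm h))
    subst this
    exact ⟨fun _ _ => 0, by simp, by simp, by simp⟩
  induction e using Finsupp.induction_linear with
  | zero => exact hzero
  | add e f he hf => exact hadd e f he hf
  | single x n =>
    induction n with
    | zero => simpa using hzero
    | succ n ih =>
      rw [Finsupp.single_add]
      refine hadd _ _ ih fun γ hγ => ?_
      have h1 : (MvPolynomial.monomial (Finsupp.single x 1) (1 : R)) = MvPolynomial.X x := rfl
      rw [h1, mulPullback, MvPolynomial.aeval_X] at hγ
      obtain ⟨k, -, hk⟩ := Finset.mem_biUnion.1 (MvPolynomial.support_sum hγ)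
      have hγ' : γ = Finsupp.single (Sum.inl (x.1, k)) 1 + Finsupp.single (Sum.inr (k, x.2)) 1 := by
        obtain ⟨γ₁, g₁, γ₂, g₂, rfl⟩ := Finset.mem_add.1 (MvPolynomial.support_mul _ _ hk)
        have a1 := MvPolynomial.support_monomial_subset g₁
        have a2 := MvPolynomial.support_monomial_subset g₂
        rw [Finset.mem_singleton] at a1 a2
        rw [a1, a2]
      subst hγ'
      obtain ⟨i, j⟩ := x
      refine ⟨fun k' y => if k = k' then (if (i, j) = y then 1 else 0) else 0, ?_, ?_, ?_⟩
      · intro y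
        simp [Finsupp.single_apply]
      · intro i' k'
        by_cases hk : k = k' <;> by_cases hi : i = i' <;> simp [hk, hi]
      · intro k' j'
        by_cases hk : k = k' <;> by_cases hi : j = j' <;> simp [hk, hi]

/-- The exponent of the term of the pull-back of `y ^ e` obtained by choosing, for each factor
`y x`, the summand with index `c x`. -/
def colorExp {p q s : ℕ} (c : Fin p × Fin q → Fin s) (e : Fin p × Fin q →₀ ℕ) :
    (Fin p × Fin s ⊕ Fin s × Fin q) →₀ ℕ :=
  ∑ x, e x • (Finsupp.single (Sum.inl (x.1, c x)) 1 + Finsupp.single (Sum.inr (c x, x.2)) 1)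

theorem colorExp_inl {p q s : ℕ} (c : Fin p × Fin q → Fin s) (e : Fin p × Fin q →₀ ℕ)
    (i : Fin p) (k : Fin s) :
    colorExp c e (Sum.inl (i, k)) = ∑ j, if c (i, j) = k then e (i, j) else 0 := by
  simp only [colorExp, Finsupp.finsetSum_apply, Fintype.sum_prod_type]
  rw [Finset.sum_eq_single i]
  · simp [Finsupp.single_apply]
  · intro i' _ hi'
    simp [hi']
  · simp

theorem colorExp_inr {p q s : ℕ} (c : Fin p × Fin q → Fin s) (e : Fin p × Fin q →₀ ℕ)
    (k : Fin s) (j : Fin q) :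
    colorExp c e (Sum.inr (k, j)) = ∑ i, if c (i, j) = k then e (i, j) else 0 := by
  simp only [colorExp, Finsupp.finsetSum_apply, Fintype.sum_prod_type_right]
  rw [Finset.sum_eq_single j]
  · simp [Finsupp.single_apply]
  · intro i' _ hi'
    simp [hi']
  · simp

theorem coeff_add_mul_ne_zero {τ : Type*} {f g : MvPolynomial τ ℕ} {a b : τ →₀ ℕ}
    (hf : f.coeff a ≠ 0) (hg : g.coeff b ≠ 0) : (f * g).coeff (a + b) ≠ 0 := by
  classical
  rw [MvPolynomial.coeff_mul]
  intro h
  have := (Finset.sum_eq_zero_iff.1 h) (a, b) (by simp)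
  exact (mul_ne_zero hf hg) this

theorem coeff_nsmul_pow_ne_zero {τ : Type*} {f : MvPolynomial τ ℕ} {a : τ →₀ ℕ}
    (hf : f.coeff a ≠ 0) (n : ℕ) : (f ^ n).coeff (n • a) ≠ 0 := by
  induction n with
  | zero => simp
  | succ n ih => rw [pow_succ, succ_nsmul]; exact coeff_add_mul_ne_zero ih hf

theorem coeff_sum_prod_ne_zero {τ ι : Type*} (S : Finset ι) {f : ι → MvPolynomial τ ℕ}
    {a : ι → τ →₀ ℕ} (hf : ∀ i, (f i).coeff (a i) ≠ 0) :
    (∏ i ∈ S, f i).coeff (∑ i ∈ S, a i) ≠ 0 := by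
  classical
  induction S using Finset.induction_on with
  | empty => simp
  | insert i S hi ih =>
    rw [Finset.prod_insert hi, Finset.sum_insert hi]
    exact coeff_add_mul_ne_zero (hf i) ih

theorem coeff_colorExp_nat_ne_zero {p q s : ℕ} (c : Fin p × Fin q → Fin s)
    (e : Fin p × Fin q →₀ ℕ) :
    (mulPullback ℕ p q s (MvPolynomial.monomial e 1)).coeff (colorExp c e) ≠ 0 := by
  have h : mulPullback ℕ p q s (MvPolynomial.monomial e 1) = ∏ x, (∑ k,
      MvPolynomial.X (Sum.inl (x.1, k)) * MvPolynomial.X (Sum.inr (k, x.2))) ^ e x := by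
    rw [mulPullback, MvPolynomial.aeval_monomial, map_one, one_mul, Finsupp.prod_fintype]
    simp
  rw [h]
  refine coeff_sum_prod_ne_zero _ fun x => coeff_nsmul_pow_ne_zero ?_ _
  classical
  rw [MvPolynomial.coeff_sum]
  intro h0
  have := (Finset.sum_eq_zero_iff.1 h0) (c x) (Finset.mem_univ _)
  revert this
  refine coeff_add_mul_ne_zero ?_ ?_ <;> simp

/-- The multinomial coefficients in the pull-back of a monomial are natural numbers, so they
do not cancel in characteristic zero. -/
theorem coeff_colorExp_ne_zero {p q s : ℕ} (c : Fin p × Fin q → Fin s)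
    (e : Fin p × Fin q →₀ ℕ) :
    (mulPullback ℂ p q s (MvPolynomial.monomial e 1)).coeff (colorExp c e) ≠ 0 := by
  have hcomp : (mulPullback ℂ p q s).toRingHom.comp (MvPolynomial.map (Nat.castRingHom ℂ)) =
      (MvPolynomial.map (Nat.castRingHom ℂ)).comp (mulPullback ℕ p q s).toRingHom := by
    refine MvPolynomial.ringHom_ext (by simp) fun x => by simp [mulPullback]
  have := congrArg (fun φ => φ (MvPolynomial.monomial e 1)) hcomp
  simp only [RingHom.comp_apply, MvPolynomial.map_monomial, map_one] at this
  change mulPullback ℂ p q s (MvPolynomial.monomial e 1) =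
    MvPolynomial.map (Nat.castRingHom ℂ) (mulPullback ℕ p q s (MvPolynomial.monomial e 1)) at this
  rw [this, MvPolynomial.coeff_map]
  simpa using coeff_colorExp_nat_ne_zero c e

/-- If the distinguished exponent of a good monomial `y ^ e₀` occurs in the pull-back of
`y ^ e`, then `e` is no heavier than `e₀`, and equally heavy only if `e = e₀`. -/
theorem eq_of_colorExp_mem_support {p q s : ℕ} {c : Fin p × Fin q → Fin s}
    {e₀ e : Fin p × Fin q →₀ ℕ}
    (hc : ∀ x y, e₀ x ≠ 0 → e₀ y ≠ 0 → c x = c y → ¬ NE x y)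
    (hmem : colorExp c e₀ ∈ (mulPullback ℂ p q s (MvPolynomial.monomial e 1)).support)
    (hwt : wt e₀ ≤ wt e) : e = e₀ := by
  obtain ⟨F, hF1, hF2, hF3⟩ := exists_decomposition e _ hmem
  have htail : ∀ z, tail e z ≤ tail e₀ z := by
    intro z
    have h1 : tail e z = ∑ k, tail (F k) z := by
      unfold tail
      rw [Finset.sum_comm]
      refine Finset.sum_congr rfl fun y _ => ?_
      split_ifs <;> simp [hF1]
    have h2 : tail e₀ z = ∑ k, tail (fun x => if c x = k then e₀ x else 0) z := by
      unfold tail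
      rw [Finset.sum_comm]
      refine Finset.sum_congr rfl fun y _ => ?_
      split_ifs <;> simp
    rw [h1, h2]
    refine Finset.sum_le_sum fun k _ => tail_le_of_margins ?_ ?_ ?_ z
    · intro x y hx hy
      simp only [ne_eq, ite_eq_right_iff, Classical.not_imp] at hx hy
      exact hc x y hx.2 hy.2 (hx.1.trans hy.1.symm)
    · intro i; rw [← hF2, colorExp_inl]
    · intro j; rw [← hF3, colorExp_inr]
  have heq : ∑ x, tail e x = ∑ x, tail e₀ x :=
    le_antisymm (Finset.sum_le_sum fun x _ => htail x)
      (by rw [← wt_eq_sum_tail, ← wt_eq_sum_tail]; exact hwt)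
  have := (Finset.sum_eq_sum_iff_of_le fun x _ => htail x).1 heq
  exact DFunLike.coe_injective (tail_injective (funext fun x => this x (Finset.mem_univ x)))

/-! ### Straightening and the second fundamental theorem -/

/-- The ideal generated by the `t × t` minors of the generic `p × q` matrix. -/
def minorIdeal (p q t : ℕ) : Ideal (MvPolynomial (Fin p × Fin q) ℂ) :=
  Ideal.span {f | ∃ (ρ : Fin t → Fin p) (γ : Fin t → Fin q),
    f = (Matrix.of fun a b => MvPolynomial.X (ρ a, γ b)).det}

theorem wt_add {p q : ℕ} (e f : Fin p × Fin q →₀ ℕ) : wt ⇑(e + f) = wt ⇑e + wt ⇑f := by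
  simp [wt, add_mul, Finset.sum_add_distrib]

theorem wt_sum_single {p q s : ℕ} (f : Fin s → Fin p × Fin q) :
    wt ⇑(∑ a, Finsupp.single (f a) 1) = ∑ a, (((f a).1.1 + 1) * ((f a).2.1 + 1)) := by
  simp only [wt, Finsupp.finsetSum_apply, Finset.sum_mul]
  rw [Finset.sum_comm]
  refine Finset.sum_congr rfl fun a _ => ?_
  rw [Finset.sum_eq_single (f a)]
  · simp
  · intro x _ hx; simp [hx.symm]
  · simp

theorem wt_le_degree {p q : ℕ} (e : Fin p × Fin q →₀ ℕ) : wt e ≤ e.degree * (p * q) := by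
  rw [Finsupp.degree_eq_sum, Finset.sum_mul]
  refine Finset.sum_le_sum fun x _ => ?_
  exact Nat.mul_le_mul_left _ (Nat.mul_le_mul x.1.2 x.2.2)

/-- Modulo the `(r + 2)`-minors every monomial is a combination of good ones: a bad monomial is
divisible by the antidiagonal term of a minor, and the other terms of that minor are heavier. -/
theorem monomial_mem_sup {p q : ℕ} (r : ℕ) : ∀ (N : ℕ) (e : Fin p × Fin q →₀ ℕ),
    e.degree * (p * q) - wt e = N →
    MvPolynomial.monomial e (1 : ℂ) ∈ (minorIdeal p q (r + 2)).restrictScalars ℂ ⊔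
      MvPolynomial.restrictSupport ℂ {e | IsGood (r + 1) e} := by
  -- The weight of an exponent of given degree is bounded, so raising it must terminate.
  intro N
  induction N using Nat.strong_induction_on with
  | _ N ih =>
  intro e he
  rcases isGood_or_chain r e with hgood | ⟨f, hf, hNE⟩
  · exact Submodule.mem_sup_right ((MvPolynomial.monomial_mem_restrictSupport ℂ).2 (Or.inl hgood))
  have hinj : Function.Injective f := by
    intro a b hab
    rcases lt_trichotomy a b with h | h | h
    · exact absurd (hNE a b h).1 (by simp [hab])
    · exact h
    · exact absurd (hNE b a h).1 (by simp [hab])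
  have hle : ∑ a, Finsupp.single (f a) 1 ≤ e := by
    intro x
    rw [Finsupp.finsetSum_apply]
    by_cases hx : ∃ a, f a = x
    · obtain ⟨a, rfl⟩ := hx
      rw [Finset.sum_eq_single a]
      · simpa using Nat.one_le_iff_ne_zero.2 (hf a)
      · intro b _ hb; simp [hinj.ne hb]
      · simp
    · push Not at hx
      simp [hx]
  obtain ⟨d, rfl⟩ := exists_add_of_le hle
  set g : Equiv.Perm (Fin (r + 2)) → (Fin p × Fin q →₀ ℕ) :=
    fun τ => ∑ a, Finsupp.single ((f (τ a)).1, (f a).2) 1 with hg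
  have hterm : ∀ τ, MvPolynomial.monomial (g τ + d) (1 : ℂ) =
      (∏ a, MvPolynomial.X ((f (τ a)).1, (f a).2)) * MvPolynomial.monomial d 1 := by
    intro τ
    rw [← one_mul (1 : ℂ), ← MvPolynomial.monomial_mul, one_mul, hg,
      MvPolynomial.monomial_sum_one]
    rfl
  have hdet : ∑ τ : Equiv.Perm (Fin (r + 2)),
      (Equiv.Perm.sign τ : ℤ) • MvPolynomial.monomial (g τ + d) (1 : ℂ) ∈
      minorIdeal p q (r + 2) := by
    have hmem : (Matrix.of fun a b => MvPolynomial.X ((f a).1, (f b).2)).det ∈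
        minorIdeal p q (r + 2) := Ideal.subset_span ⟨_, _, rfl⟩
    have := Ideal.mul_mem_right (MvPolynomial.monomial d 1) _ hmem
    rw [Matrix.det_apply, Finset.sum_mul] at this
    convert this using 2 with τ _
    rw [hterm, Units.smul_def, smul_mul_assoc]
    rfl
  rw [← Finset.add_sum_erase _ _ (Finset.mem_univ 1)] at hdet
  have hrest : ∑ τ ∈ Finset.univ.erase (1 : Equiv.Perm (Fin (r + 2))),
      (Equiv.Perm.sign τ : ℤ) • MvPolynomial.monomial (g τ + d) (1 : ℂ) ∈
      (minorIdeal p q (r + 2)).restrictScalars ℂ ⊔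
        MvPolynomial.restrictSupport ℂ {e | IsGood (r + 1) e} := by
    refine Submodule.sum_mem _ fun τ hτ => zsmul_mem (ih _ ?_ _ rfl) _
    have hwt := chain_weight_lt hNE (Finset.ne_of_mem_erase hτ)
    have h1 := wt_le_degree (g τ + d)
    have h2 : (g τ + d).degree = (∑ a, Finsupp.single (f a) 1 + d).degree := by
      simp [hg]
    rw [h2] at h1
    rw [← he, h2]
    have h3 : wt ⇑(∑ a, Finsupp.single (f a) 1 + d : Fin p × Fin q →₀ ℕ) < wt ⇑(g τ + d) := by
      rw [wt_add, wt_add, hg, wt_sum_single, wt_sum_single]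
      simpa using hwt
    omega
  have hone : MvPolynomial.monomial (∑ a, Finsupp.single (f a) 1 + d) (1 : ℂ) =
      (Equiv.Perm.sign (1 : Equiv.Perm (Fin (r + 2))) : ℤ) •
        MvPolynomial.monomial (g 1 + d) (1 : ℂ) := by
    simp [hg]
  rw [hone]
  exact (Submodule.add_mem_iff_left _ hrest).1 (Submodule.mem_sup_left hdet)

theorem mem_sup {p q : ℕ} (r : ℕ) (F : MvPolynomial (Fin p × Fin q) ℂ) :
    F ∈ (minorIdeal p q (r + 2)).restrictScalars ℂ ⊔
      MvPolynomial.restrictSupport ℂ {e | IsGood (r + 1) e} := by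
  rw [← MvPolynomial.support_sum_monomial_coeff F]
  refine Submodule.sum_mem _ fun e _ => ?_
  rw [← mul_one (MvPolynomial.coeff e F), ← smul_eq_mul, ← MvPolynomial.smul_monomial]
  exact Submodule.smul_mem _ _ (monomial_mem_sup r _ e rfl)

/-- A product through a space of dimension `s` has vanishing `(s + 1)`-minors, over any
commutative ring. -/
theorem det_eq_zero_of_factor {R : Type*} [CommRing R] {s : ℕ}
    (M : Matrix (Fin (s + 1)) (Fin (s + 1)) R) (U : Fin (s + 1) → Fin s → R)
    (V : Fin s → Fin (s + 1) → R) (h : ∀ a b, M a b = ∑ k, U a k * V k b) : M.det = 0 := by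
  have : M = (Matrix.of fun a => (Fin.cons 0 (U a) : Fin (s + 1) → R)) *
      (Matrix.of (Fin.cons 0 V : Fin (s + 1) → Fin (s + 1) → R)) := by
    ext a b
    rw [h, Matrix.mul_apply, Fin.sum_univ_succ]
    simp
  rw [this, Matrix.det_mul, Matrix.det_eq_zero_of_column_eq_zero 0 (by simp), zero_mul]

/-- Distinct good monomials stay linearly independent after pull-back. -/
theorem eq_zero_of_mulPullback_eq_zero {p q s : ℕ} {h : MvPolynomial (Fin p × Fin q) ℂ}
    (hgood : ∀ e ∈ h.support, IsGood s e) (hzero : mulPullback ℂ p q s h = 0) : h = 0 := by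
  by_contra hne
  -- An exponent of least weight is isolated by the coefficient at its distinguished exponent.
  obtain ⟨e₀, he₀, hmin⟩ := Finset.exists_min_image h.support (fun e => wt e)
    (MvPolynomial.support_nonempty.2 hne)
  obtain ⟨c, hc⟩ := hgood e₀ he₀
  have hexp : mulPullback ℂ p q s h = ∑ e ∈ h.support,
      MvPolynomial.coeff e h • mulPullback ℂ p q s (MvPolynomial.monomial e 1) := by
    conv_lhs => rw [← MvPolynomial.support_sum_monomial_coeff h]
    rw [map_sum]
    refine Finset.sum_congr rfl fun e _ => ?_
    rw [← map_smul, MvPolynomial.smul_monomial, smul_eq_mul, mul_one]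
  have hcoeff := congrArg (MvPolynomial.coeff (colorExp c e₀)) (hexp.symm.trans hzero)
  rw [MvPolynomial.coeff_sum, MvPolynomial.coeff_zero, Finset.sum_eq_single e₀] at hcoeff
  · rw [MvPolynomial.coeff_smul, smul_eq_mul] at hcoeff
    exact mul_ne_zero (MvPolynomial.mem_support_iff.1 he₀) (coeff_colorExp_ne_zero c e₀) hcoeff
  · intro e he hee
    rw [MvPolynomial.coeff_smul]
    by_contra h0
    refine hee (eq_of_colorExp_mem_support hc (MvPolynomial.mem_support_iff.2 ?_) (hmin e he))
    intro h1
    exact h0 (by rw [h1, smul_zero])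
  · intro h0; exact absurd he₀ h0

/-- The second fundamental theorem of invariant theory for the general linear group: a
polynomial vanishing on all real matrices of rank at most `r + 1` lies in the ideal of
`(r + 2)`-minors. -/
theorem mem_minorIdeal {p q r : ℕ} {F : MvPolynomial (Fin p × Fin q) ℂ}
    (hF : ∀ (U : Fin p → Fin (r + 1) → ℝ) (V : Fin (r + 1) → Fin q → ℝ),
      MvPolynomial.eval (fun x => ((∑ k, U x.1 k * V k x.2 : ℝ) : ℂ)) F = 0) :
    F ∈ minorIdeal p q (r + 2) := by
  obtain ⟨g, hg, h, hh, rfl⟩ := Submodule.mem_sup.1 (mem_sup r F)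
  have hF0 : mulPullback ℂ p q (r + 1) (g + h) = 0 := by
    -- A complex polynomial is determined by its values at real points.
    refine MvPolynomial.funext_set (fun _ => Set.range ((↑) : ℝ → ℂ))
      (fun _ => Set.infinite_range_of_injective Complex.ofReal_injective) fun x hx => ?_
    choose y hy using fun i => hx i (Set.mem_univ i)
    have := hF (fun i k => y (Sum.inl (i, k))) (fun k j => y (Sum.inr (k, j)))
    rw [map_zero, ← this, mulPullback, MvPolynomial.aeval_def, ← MvPolynomial.coe_eval₂Hom,
      ← RingHom.comp_apply]
    congr 1
    refine MvPolynomial.ringHom_ext (by simp) fun i => by simp [hy]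
  have hg0 : mulPullback ℂ p q (r + 1) g = 0 := by
    have : minorIdeal p q (r + 2) ≤ RingHom.ker (mulPullback ℂ p q (r + 1)) := by
      refine Ideal.span_le.2 ?_
      rintro _ ⟨ρ, γ, rfl⟩
      change mulPullback ℂ p q (r + 1) _ = 0
      rw [AlgHom.map_det]
      refine det_eq_zero_of_factor _ (fun a k => MvPolynomial.X (Sum.inl (ρ a, k)))
        (fun k b => MvPolynomial.X (Sum.inr (k, γ b))) fun a b => ?_
      simp [mulPullback]
    exact this hg
  have hh0 : h = 0 :=
    eq_zero_of_mulPullback_eq_zero (fun e he => hh he) (by simpa [hg0] using hF0)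
  rw [hh0, add_zero]
  exact hg

/-! ### Affine maps realised by the network -/

theorem hiddenVec_eq_affine (n : ℕ → ℕ) (A : (ℓ : ℕ) → Fin (n ℓ) → Bool)
    (W : (ℓ : ℕ) → Matrix (Fin (n (ℓ + 1))) (Fin (n ℓ)) ℝ)
    (b : (ℓ : ℕ) → Fin (n (ℓ + 1)) → ℝ) (ℓ : ℕ) :
    ∃ (G : Matrix (Fin (n ℓ)) (Fin (n 0)) ℝ) (g : Fin (n ℓ) → ℝ),
      ∀ x, hiddenVec n A W b x ℓ = G.mulVec x + g := by
  induction ℓ with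
  | zero => exact ⟨1, 0, fun x => by simp [hiddenVec]⟩
  | succ ℓ ih =>
    obtain ⟨G, g, h⟩ := ih
    refine ⟨maskMat n A (ℓ + 1) * (W ℓ * G), (maskMat n A (ℓ + 1)).mulVec ((W ℓ).mulVec g + b ℓ),
      fun x => ?_⟩
    rw [hiddenVec, h]
    simp only [Matrix.mulVec_add, Matrix.mulVec_mulVec, add_assoc]

theorem hiddenVec_eq_affine_of_le (n : ℕ → ℕ) (A : (ℓ : ℕ) → Fin (n ℓ) → Bool)
    (W : (ℓ : ℕ) → Matrix (Fin (n (ℓ + 1))) (Fin (n ℓ)) ℝ)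
    (b : (ℓ : ℕ) → Fin (n (ℓ + 1)) → ℝ) {ℓ K : ℕ} (hℓ : ℓ ≤ K) :
    ∃ (G : Matrix (Fin (n K)) (Fin (n ℓ)) ℝ) (g : Fin (n K) → ℝ),
      ∀ x, hiddenVec n A W b x K = G.mulVec (hiddenVec n A W b x ℓ) + g := by
  induction K, hℓ using Nat.le_induction with
  | base => exact ⟨1, 0, fun x => by simp⟩
  | succ K _ ih =>
    obtain ⟨G, g, h⟩ := ih
    refine ⟨maskMat n A (K + 1) * (W K * G), (maskMat n A (K + 1)).mulVec ((W K).mulVec g + b K),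
      fun x => ?_⟩
    rw [hiddenVec, h]
    simp only [Matrix.mulVec_add, Matrix.mulVec_mulVec, add_assoc]

/-- The masked output is an affine map whose linear part factors through the active neurons of
any hidden layer. -/
theorem exists_factor_of_params (n : ℕ → ℕ) (A : (ℓ : ℕ) → Fin (n ℓ) → Bool) {K r ℓ : ℕ}
    (hℓ : ℓ ∈ Set.Icc 1 K) (hr : activeCard n A ℓ = r)
    (W : (ℓ : ℕ) → Matrix (Fin (n (ℓ + 1))) (Fin (n ℓ)) ℝ)
    (b : (ℓ : ℕ) → Fin (n (ℓ + 1)) → ℝ) :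
    ∃ (P : Matrix (Fin (n (K + 1))) (Fin r) ℝ) (Q : Matrix (Fin r) (Fin (n 0)) ℝ)
      (c : Fin (n (K + 1)) → ℝ),
      ∀ x, maskedOutput n A W b x (K + 1) = P.mulVec (Q.mulVec x) + c := by
  obtain ⟨ℓ, rfl⟩ : ∃ ℓ', ℓ = ℓ' + 1 := ⟨ℓ - 1, (Nat.sub_add_cancel hℓ.1).symm⟩
  obtain ⟨G, g, hG⟩ := hiddenVec_eq_affine n A W b ℓ
  obtain ⟨H, h, hH⟩ := hiddenVec_eq_affine_of_le n A W b hℓ.2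
  set S := Finset.univ.filter fun i : Fin (n (ℓ + 1)) => A (ℓ + 1) i = true with hS
  have hcard : Fintype.card S = r := by rw [Fintype.card_coe]; exact hr
  let φ : Fin r ≃ S := (Fintype.equivFinOfCardEq hcard).symm
  -- The mask is the product of the inclusion and the projection of the active coordinates.
  have hmask : maskMat n A (ℓ + 1) =
      (Matrix.of fun i t => if (φ t : Fin (n (ℓ + 1))) = i then (1 : ℝ) else 0) *
        Matrix.of fun t j => if (φ t : Fin (n (ℓ + 1))) = j then (1 : ℝ) else 0 := by
    ext i j
    simp only [maskMat, Matrix.diagonal_apply, Matrix.mul_apply, Matrix.of_apply]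
    rw [φ.sum_comp (fun s : S => (if (s : Fin (n (ℓ + 1))) = i then (1 : ℝ) else 0) *
        if (s : Fin (n (ℓ + 1))) = j then 1 else 0),
      Finset.sum_coe_sort S (fun s => (if s = i then (1 : ℝ) else 0) * if s = j then 1 else 0)]
    by_cases hij : i = j
    · subst hij; simp [hS]
    · have hji : ¬ j = i := fun h => hij h.symm
      simp [hS, hij, hji]
  refine ⟨W K * H * (Matrix.of fun i t => if (φ t : Fin (n (ℓ + 1))) = i then (1 : ℝ) else 0),
    (Matrix.of fun t j => if (φ t : Fin (n (ℓ + 1))) = j then (1 : ℝ) else 0) * (W ℓ * G),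
    (W K).mulVec (H.mulVec ((maskMat n A (ℓ + 1)).mulVec ((W ℓ).mulVec g + b ℓ)) + h) + b K,
    fun x => ?_⟩
  rw [maskedOutput, hH, hiddenVec, hG]
  simp only [Matrix.mulVec_add, Matrix.mulVec_mulVec, hmask, add_assoc, Matrix.mul_assoc]

/-- If every hidden layer has at least `r` active neurons, then every affine map of rank at most
`r` is a masked output. -/
theorem exists_params_of_factor (n : ℕ → ℕ) (A : (ℓ : ℕ) → Fin (n ℓ) → Bool) {K r : ℕ}
    (hK : 1 ≤ K) (hr : ∀ ℓ ∈ Set.Icc 1 K, r ≤ activeCard n A ℓ)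
    (P : Matrix (Fin (n (K + 1))) (Fin r) ℝ) (Q : Matrix (Fin r) (Fin (n 0)) ℝ)
    (c : Fin (n (K + 1)) → ℝ) :
    ∃ (W : (ℓ : ℕ) → Matrix (Fin (n (ℓ + 1))) (Fin (n ℓ)) ℝ) (b : (ℓ : ℕ) → Fin (n (ℓ + 1)) → ℝ),
      ∀ x, maskedOutput n A W b x (K + 1) = P.mulVec (Q.mulVec x) + c := by
  -- `S ℓ` embeds `ℝ ^ r` into the active coordinates of layer `ℓ`, with left inverse `T ℓ`.
  have hST : ∀ ℓ, ∃ (S : Matrix (Fin (n ℓ)) (Fin r) ℝ) (T : Matrix (Fin r) (Fin (n ℓ)) ℝ),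
      ℓ ∈ Set.Icc 1 K → T * S = 1 ∧ maskMat n A ℓ * S = S := by
    intro ℓ
    by_cases hℓ : ℓ ∈ Set.Icc 1 K
    · have hc : Fintype.card (Fin r) ≤
          Fintype.card (Finset.univ.filter fun i : Fin (n ℓ) => A ℓ i = true) := by
        rw [Fintype.card_fin, Fintype.card_coe]; exact hr ℓ hℓ
      obtain ⟨φ⟩ := Function.Embedding.nonempty_of_card_le hc
      refine ⟨Matrix.of fun i t => if i = φ t then 1 else 0,
        Matrix.of fun t i => if i = φ t then 1 else 0, fun _ => ⟨?_, ?_⟩⟩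
      · ext t u
        simp only [Matrix.mul_apply, Matrix.of_apply, Matrix.one_apply]
        simp [eq_comm]
      · ext i t
        have hφ := (Finset.mem_filter.1 (φ t).2).2
        rw [maskMat, Matrix.diagonal_mul, Matrix.of_apply]
        by_cases h : i = φ t
        · simp [h, hφ]
        · simp [h]
    · exact ⟨0, 0, fun h => absurd h hℓ⟩
  choose S T hST using hST
  -- The network `T 0 = Q`, `S (ℓ + 1) * T ℓ`, `S (K + 1) = P` carries `Q x` unchanged through the
  -- hidden layers, since `T ℓ * S ℓ = 1`.
  set S' := Function.update S (K + 1) P with hS'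
  set T' := Function.update T 0 Q with hT'
  refine ⟨fun ℓ => S' (ℓ + 1) * T' ℓ, fun ℓ => Function.update (fun ℓ => (0 : Fin (n ℓ) → ℝ))
    (K + 1) c (ℓ + 1), fun x => ?_⟩
  have hhid : ∀ ℓ, ℓ + 1 ≤ K → hiddenVec n A (fun ℓ => S' (ℓ + 1) * T' ℓ)
      (fun ℓ => Function.update (fun ℓ => (0 : Fin (n ℓ) → ℝ)) (K + 1) c (ℓ + 1)) x (ℓ + 1) =
      (S (ℓ + 1)).mulVec (Q.mulVec x) := by
    intro ℓ
    induction ℓ with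
    | zero =>
      intro h
      have hm := (hST (0 + 1) ⟨le_rfl, hK⟩).2
      rw [hiddenVec, hiddenVec, hS', hT', Function.update_self,
        Function.update_of_ne (by omega), Function.update_of_ne (by omega), add_zero,
        ← Matrix.mulVec_mulVec, Matrix.mulVec_mulVec, hm]
    | succ ℓ ih =>
      intro h
      have hm := (hST (ℓ + 1 + 1) ⟨by omega, h⟩).2
      have hi := (hST (ℓ + 1) ⟨by omega, by omega⟩).1
      rw [hiddenVec, ih (by omega), hS', hT', Function.update_of_ne (by omega),
        Function.update_of_ne (by omega), Function.update_of_ne (by omega), add_zero]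
      simp only [Matrix.mulVec_mulVec]
      rw [show maskMat n A (ℓ + 1 + 1) * (S (ℓ + 1 + 1) * T (ℓ + 1) * (S (ℓ + 1) * Q)) =
        (maskMat n A (ℓ + 1 + 1) * S (ℓ + 1 + 1)) * ((T (ℓ + 1) * S (ℓ + 1)) * Q) by
          simp only [Matrix.mul_assoc], hm, hi, Matrix.one_mul]
  obtain ⟨k, rfl⟩ : ∃ k, K = k + 1 := ⟨K - 1, (Nat.sub_add_cancel hK).symm⟩
  have hi := (hST (k + 1) ⟨by omega, le_rfl⟩).1
  rw [maskedOutput, hhid k le_rfl, hS', hT', Function.update_self, Function.update_self,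
    Function.update_of_ne (by omega)]
  simp only [Matrix.mulVec_mulVec]
  rw [show P * T (k + 1) * (S (k + 1) * Q) = P * ((T (k + 1) * S (k + 1)) * Q) by
    simp only [Matrix.mul_assoc], hi, Matrix.one_mul]

/-! ### The augmented generic matrix -/

/-- Setting the entries of the top row of the generic `(p + 1) × q` matrix to `1`. -/
def dehomogenize (p q : ℕ) :
    MvPolynomial (Fin (p + 1) × Fin q) ℂ →ₐ[ℂ] MvPolynomial (Fin p × Fin q) ℂ :=
  MvPolynomial.aeval fun x =>
    (Fin.cons 1 (fun k => MvPolynomial.X (k, x.2)) :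
      Fin (p + 1) → MvPolynomial (Fin p × Fin q) ℂ) x.1

/-- The `t × t` minors of the generic `p × q` matrix with a top row of ones appended. -/
def augMinors (p q t : ℕ) : Set (MvPolynomial (Fin p × Fin q) ℂ) :=
  {f | ∃ (ρ : Fin t → Fin (p + 1)) (γ : Fin t → Fin q),
    f = (Matrix.of fun a b =>
      (Fin.cons 1 (fun k => MvPolynomial.X (k, γ b)) :
        Fin (p + 1) → MvPolynomial (Fin p × Fin q) ℂ) (ρ a)).det}

theorem dehomogenize_mem {p q t : ℕ} {F : MvPolynomial (Fin (p + 1) × Fin q) ℂ}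
    (hF : F ∈ minorIdeal (p + 1) q t) : dehomogenize p q F ∈ Ideal.span (augMinors p q t) := by
  have : minorIdeal (p + 1) q t ≤ (Ideal.span (augMinors p q t)).comap (dehomogenize p q) := by
    refine Ideal.span_le.2 ?_
    rintro _ ⟨ρ, γ, rfl⟩
    refine Ideal.subset_span ⟨ρ, γ, ?_⟩
    rw [AlgHom.map_det]
    congr 1
    ext1 a b
    simp [dehomogenize]
  exact this hF

/-- Every polynomial in the entries `y (k, j)` is homogenized in each column by a power of the
top row: up to that power, the value of `F` at `z` is the value of `f` at
`z (k + 1, j) / z (0, j)`. -/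
theorem exists_homogenization {p q : ℕ} (f : MvPolynomial (Fin p × Fin q) ℂ) :
    ∃ (D : ℕ) (F : MvPolynomial (Fin (p + 1) × Fin q) ℂ), dehomogenize p q F = f ∧
      ∀ z : Fin (p + 1) × Fin q → ℂ, (∀ j, z (0, j) ≠ 0) →
        MvPolynomial.eval z F = (∏ j, z (0, j)) ^ D *
          MvPolynomial.eval (fun x => z (x.1.succ, x.2) / z (0, x.2)) f := by
  induction f using MvPolynomial.induction_on with
  | C a => exact ⟨0, MvPolynomial.C a, by simp [dehomogenize], by simp⟩
  | add f g hf hg =>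
    obtain ⟨D, F, hF, hF'⟩ := hf
    obtain ⟨E, G, hG, hG'⟩ := hg
    refine ⟨D + E, (∏ j, MvPolynomial.X (0, j)) ^ E * F + (∏ j, MvPolynomial.X (0, j)) ^ D * G,
      ?_, fun z hz => ?_⟩
    · rw [map_add, map_mul, map_mul, hF, hG]
      simp [dehomogenize]
    · simp only [map_add, map_mul, map_pow, map_prod, MvPolynomial.eval_X, hF' z hz, hG' z hz]
      ring
  | mul_X f x hf =>
    obtain ⟨D, F, hF, hF'⟩ := hf
    refine ⟨D + 1, F * (MvPolynomial.X (x.1.succ, x.2) *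
      ∏ j ∈ Finset.univ.erase x.2, MvPolynomial.X (0, j)), ?_, fun z hz => ?_⟩
    · rw [map_mul, hF]
      simp [dehomogenize]
    · simp only [map_mul, map_prod, MvPolynomial.eval_X, hF' z hz]
      rw [pow_succ, ← Finset.mul_prod_erase Finset.univ (fun j => z (0, j)) (Finset.mem_univ x.2)]
      have := hz x.2
      field_simp

/-- A product `U * V` through `ℝ ^ (r + 1)` with nowhere vanishing top row becomes, after
dividing each column by its top entry, a matrix of the form `c 1ᵀ + P Z` with inner dimension
`r`. -/
theorem exists_affine_factor {p q r : ℕ} (U : Fin (p + 1) → Fin (r + 1) → ℝ)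
    (V : Fin (r + 1) → Fin q → ℝ) (h : ∀ j, ∑ t, U 0 t * V t j ≠ 0) :
    ∃ (c : Fin p → ℝ) (P : Fin p → Fin r → ℝ) (Z : Fin r → Fin q → ℝ), ∀ k j,
      (∑ t, U k.succ t * V t j) / ∑ t, U 0 t * V t j = c k + ∑ t, P k t * Z t j := by
  by_cases hU : ∃ t, U 0 t ≠ 0
  · obtain ⟨t, ht⟩ := hU
    -- Subtracting `U k.succ t / U 0 t` times the top row from row `k` eliminates coordinate `t`.
    refine ⟨fun k => U k.succ t / U 0 t,
      fun k s => U k.succ (t.succAbove s) - U k.succ t / U 0 t * U 0 (t.succAbove s),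
      fun s j => V (t.succAbove s) j / ∑ t, U 0 t * V t j, fun k j => ?_⟩
    have hj := h j
    have h1 : ∀ s, (U k.succ (t.succAbove s) - U k.succ t / U 0 t * U 0 (t.succAbove s)) *
        (V (t.succAbove s) j / ∑ t, U 0 t * V t j) =
        (U k.succ (t.succAbove s) * V (t.succAbove s) j -
          U k.succ t / U 0 t * (U 0 (t.succAbove s) * V (t.succAbove s) j)) /
          ∑ t, U 0 t * V t j := fun s => by ring
    simp only [h1]
    rw [← Finset.sum_div, Finset.sum_sub_distrib, ← Finset.mul_sum, div_eq_iff hj, add_mul,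
      div_mul_cancel₀ _ hj]
    rw [Fin.sum_univ_succAbove _ t, Fin.sum_univ_succAbove (fun t => U 0 t * V t j) t]
    field_simp
    ring
  · push Not at hU
    refine ⟨0, 0, 0, fun k j => absurd ?_ (h j)⟩
    simp [hU]

/-- The affine version of the second fundamental theorem: a polynomial vanishing at all real
matrices `c 1ᵀ + P Z` of inner dimension `r` is in the ideal of `(r + 2)`-minors of the augmented
generic matrix. -/
theorem mem_span_augMinors {p q r : ℕ} {f : MvPolynomial (Fin p × Fin q) ℂ}
    (hf : ∀ (c : Fin p → ℝ) (P : Fin p → Fin r → ℝ) (Z : Fin r → Fin q → ℝ),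
      MvPolynomial.eval (fun x => ((c x.1 + ∑ t, P x.1 t * Z t x.2 : ℝ) : ℂ)) f = 0) :
    f ∈ Ideal.span (augMinors p q (r + 2)) := by
  obtain ⟨D, F, hF, hF'⟩ := exists_homogenization f
  -- The extra factor makes the homogenization vanish also where a top entry is zero.
  have hmem : F * ∏ j, MvPolynomial.X (0, j) ∈ minorIdeal (p + 1) q (r + 2) := by
    refine mem_minorIdeal fun U V => ?_
    simp only [map_mul, map_prod, MvPolynomial.eval_X]
    by_cases h : ∀ j, ∑ t, U 0 t * V t j ≠ 0
    · obtain ⟨c, P, Z, hcPZ⟩ := exists_affine_factor U V h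
      rw [hF' _ fun j => by exact_mod_cast h j]
      have := hf c P Z
      simp only [← hcPZ, Complex.ofReal_div] at this
      rw [this, mul_zero, zero_mul]
    · push Not at h
      obtain ⟨j, hj⟩ := h
      rw [Finset.prod_eq_zero (Finset.mem_univ j) (by exact_mod_cast hj), mul_zero]
  have := dehomogenize_mem hmem
  rw [map_mul, hF] at this
  simpa [dehomogenize] using this

theorem eval_augMinor {p q r : ℕ} (c : Fin p → ℝ) (P : Fin p → Fin r → ℝ)
    (Z : Fin r → Fin q → ℝ) (ρ : Fin (r + 2) → Fin (p + 1)) (γ : Fin (r + 2) → Fin q)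
    (y : Fin p × Fin q → ℝ) (hy : ∀ k j, y (k, j) = c k + ∑ t, P k t * Z t j) :
    MvPolynomial.eval (fun x => (y x : ℂ)) (Matrix.of fun a b =>
      (Fin.cons 1 (fun k => MvPolynomial.X (k, γ b)) :
        Fin (p + 1) → MvPolynomial (Fin p × Fin q) ℂ) (ρ a)).det = 0 := by
  rw [RingHom.map_det]
  refine det_eq_zero_of_factor _
    (fun a => (Fin.cons (Fin.cons 1 0)
      (fun k => Fin.cons (c k : ℂ) fun t => (P k t : ℂ)) : Fin (p + 1) → Fin (r + 1) → ℂ) (ρ a))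
    (fun s b => (Fin.cons 1 (fun t => (Z t (γ b) : ℂ)) : Fin (r + 1) → ℂ) s) fun a b => ?_
  simp only [RingHom.mapMatrix_apply, Matrix.map_apply, Matrix.of_apply]
  generalize ρ a = i
  rw [Fin.sum_univ_succ]
  induction i using Fin.cases with
  | zero => simp
  | succ k => simp [hy]

/-- Affine functions take arbitrary values at affinely independent points. -/
theorem exists_affine_interpolation {N q : ℕ} {x : Fin q → Fin N → ℝ}
    (hx : LinearIndependent ℝ (fun j => (Fin.cons 1 (x j) : Fin (N + 1) → ℝ))) (z : Fin q → ℝ) :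
    ∃ (a : ℝ) (w : Fin N → ℝ), ∀ j, z j = a + ∑ i, w i * x j i := by
  obtain ⟨L, hL⟩ := LinearMap.exists_leftInverse_of_injective
    (Fintype.linearCombination ℝ (fun j => (Fin.cons 1 (x j) : Fin (N + 1) → ℝ)))
    (LinearMap.ker_eq_bot.2 hx.fintypeLinearCombination_injective)
  let φ : (Fin (N + 1) → ℝ) →ₗ[ℝ] ℝ := (Fintype.linearCombination ℝ z).comp L
  refine ⟨φ (Pi.single 0 1), fun i => φ (Pi.single i.succ 1), fun j => ?_⟩
  have h1 : φ (Fin.cons 1 (x j)) = z j := by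
    have := LinearMap.congr_fun hL (Pi.single j 1)
    simp only [LinearMap.comp_apply, Fintype.linearCombination_apply_single, one_smul,
      LinearMap.id_apply] at this
    simp [φ, this]
  rw [← h1, LinearMap.pi_apply_eq_sum_univ φ, Fin.sum_univ_succ]
  have hs : ∀ i, (Pi.single i 1 : Fin (N + 1) → ℝ) = fun j => if i = j then 1 else 0 := by
    intro i; ext j; simp [Pi.single_apply, eq_comm]
  simp [mul_comm, hs]

/-! ### The vanishing ideal -/

/-- At affinely independent data points, every matrix `c 1ᵀ + P Z` of inner dimension `r` is
attained by the network. -/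
theorem exists_params_of_values (n : ℕ → ℕ) (A : (ℓ : ℕ) → Fin (n ℓ) → Bool) {K r q : ℕ}
    (hK : 1 ≤ K) (hr : ∀ ℓ ∈ Set.Icc 1 K, r ≤ activeCard n A ℓ) {x : Fin q → Fin (n 0) → ℝ}
    (hx : LinearIndependent ℝ (fun j => (Fin.cons 1 (x j) : Fin (n 0 + 1) → ℝ)))
    (c : Fin (n (K + 1)) → ℝ) (P : Fin (n (K + 1)) → Fin r → ℝ) (Z : Fin r → Fin q → ℝ) :
    ∃ (W : (ℓ : ℕ) → Matrix (Fin (n (ℓ + 1))) (Fin (n ℓ)) ℝ)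
      (b : (ℓ : ℕ) → Fin (n (ℓ + 1)) → ℝ), ∀ j k,
      maskedOutput n A W b (x j) (K + 1) k = c k + ∑ t, P k t * Z t j := by
  choose a w haw using fun t => exists_affine_interpolation hx (Z t)
  obtain ⟨W, b, h⟩ := exists_params_of_factor n A hK hr (Matrix.of P) (Matrix.of w)
    (fun k => c k + ∑ t, P k t * a t)
  refine ⟨W, b, fun j k => ?_⟩
  rw [h]
  simp only [haw, mul_add, Finset.sum_add_distrib, Pi.add_apply, Matrix.mulVec, dotProduct,
    Matrix.of_apply]
  ring

/-- Generators of the vanishing ideal of the image of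
`θ ↦ F^A_X(θ) = [f^A_θ(x^{(1)}), …, f^A_θ(x^{(m)})]` for a network with biases and a
dataset `X` in affine general position, with `L = K + 1 ≥ 2` and
`r = min_{1 ≤ ℓ ≤ L-1} Σ_i A^ℓ_i`.
(i) If `m ≤ n_0 + 1`, the ideal is generated by all `(r+2)×(r+2)` minors of the generic
matrix `Y` augmented by a top row of ones.  (ii) If `m > n_0 + 1` and
`(1,x^{(i)}) = Σ_{j ≥ m-n_0} λ_{ij} (1,x^{(j)})`, the ideal is generated by the
corresponding linear forms together with all `(r+2)×(r+2)` minors of the augmented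
matrix on the last `n_0 + 1` columns. -/
theorem statement6 (n : ℕ → ℕ) (K : ℕ) (hK : 1 ≤ K)
    (A : (ℓ : ℕ) → Fin (n ℓ) → Bool) (r : ℕ)
    (hr : IsLeast ((fun ℓ => activeCard n A ℓ) '' Set.Icc 1 K) r)
    (m : ℕ) (X : Matrix (Fin (n 0)) (Fin m) ℝ)
    (hgen : ∀ s : Finset (Fin m), s.card = min (n 0 + 1) m →
      LinearIndependent ℝ
        (fun j : s => (Fin.cons 1 (fun a => X a j.1) : Fin (n 0 + 1) → ℝ))) :
    ((m ≤ n 0 + 1) →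
      vanishingIdeal {y : Fin (n (K + 1)) × Fin m → ℝ |
          ∃ (W : (ℓ : ℕ) → Matrix (Fin (n (ℓ + 1))) (Fin (n ℓ)) ℝ)
            (b : (ℓ : ℕ) → Fin (n (ℓ + 1)) → ℝ),
            y = fun q => maskedOutput n A W b (fun a => X a q.2) (K + 1) q.1} =
        Ideal.span {f : MvPolynomial (Fin (n (K + 1)) × Fin m) ℂ |
          ∃ (ρ : Fin (r + 2) → Fin (n (K + 1) + 1)) (γ : Fin (r + 2) → Fin m),
            f = (Matrix.of fun a b =>
              (Fin.cons 1 (fun kk => MvPolynomial.X (kk, γ b)) :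
                Fin (n (K + 1) + 1) → MvPolynomial (Fin (n (K + 1)) × Fin m) ℂ) (ρ a)).det}) ∧
    ((h : n 0 + 1 < m) → ∀ lam : Fin (m - n 0 - 1) → Fin (n 0 + 1) → ℝ,
      (∀ i : Fin (m - n 0 - 1),
        (Fin.cons 1 (fun a => X a ⟨i.1, by have := i.2; omega⟩) : Fin (n 0 + 1) → ℝ) =
          ∑ j : Fin (n 0 + 1), lam i j •
            (Fin.cons 1 (fun a => X a ⟨m - (n 0 + 1) + j.1, by have := j.2; omega⟩) :
              Fin (n 0 + 1) → ℝ)) →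
      vanishingIdeal {y : Fin (n (K + 1)) × Fin m → ℝ |
          ∃ (W : (ℓ : ℕ) → Matrix (Fin (n (ℓ + 1))) (Fin (n ℓ)) ℝ)
            (b : (ℓ : ℕ) → Fin (n (ℓ + 1)) → ℝ),
            y = fun q => maskedOutput n A W b (fun a => X a q.2) (K + 1) q.1} =
        Ideal.span
          ({f : MvPolynomial (Fin (n (K + 1)) × Fin m) ℂ |
              ∃ (kk : Fin (n (K + 1))) (i : Fin (m - n 0 - 1)),
                f = MvPolynomial.X (kk, (⟨i.1, by have := i.2; omega⟩ : Fin m)) -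
                  ∑ j : Fin (n 0 + 1), MvPolynomial.C ((lam i j : ℂ)) *
                    MvPolynomial.X
                      (kk, (⟨m - (n 0 + 1) + j.1, by have := j.2; omega⟩ : Fin m))} ∪
            {f : MvPolynomial (Fin (n (K + 1)) × Fin m) ℂ |
              ∃ (ρ : Fin (r + 2) → Fin (n (K + 1) + 1)) (γ : Fin (r + 2) → Fin (n 0 + 1)),
                f = (Matrix.of fun a b =>
                  (Fin.cons 1 (fun kk => MvPolynomial.X
                      (kk, (⟨m - (n 0 + 1) + (γ b).1, by have := (γ b).2; omega⟩ : Fin m))) :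
                    Fin (n (K + 1) + 1) → MvPolynomial (Fin (n (K + 1)) × Fin m) ℂ)
                    (ρ a)).det})) := by
  have hr₁ : ∀ ℓ ∈ Set.Icc 1 K, r ≤ activeCard n A ℓ := fun ℓ hℓ => hr.2 ⟨ℓ, hℓ, rfl⟩
  obtain ⟨ℓ₀, hℓ₀, hr₀⟩ := hr.1
  constructor
  · intro hm
    refine le_antisymm (fun f hf => ?_) (Ideal.span_le.2 ?_)
    · have hX : LinearIndependent ℝ
          (fun j => (Fin.cons 1 (fun a => X a j) : Fin (n 0 + 1) → ℝ)) := by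
        have h := hgen Finset.univ (by simp [hm])
        exact h.comp (fun j => (⟨j, Finset.mem_univ j⟩ : (Finset.univ : Finset (Fin m))))
          fun i j hij => by simpa using hij
      refine mem_span_augMinors fun c P Z => ?_
      obtain ⟨W, b, hWb⟩ := exists_params_of_values n A hK hr₁ hX c P Z
      have h := hf _ ⟨W, b, rfl⟩
      simpa only [hWb] using h
    · rintro _ ⟨ρ, γ, rfl⟩ _ ⟨W, b, rfl⟩
      obtain ⟨P, Q, c, hPQ⟩ := exists_factor_of_params n A hℓ₀ hr₀ W b
      refine eval_augMinor c P (fun t j => (Q.mulVec (fun a => X a j)) t) ρ γ _ fun k j => ?_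
      rw [hPQ, Pi.add_apply, add_comm]
      rfl
  · intro h lam hlam
    have hcol : ∀ W b (k : Fin (n (K + 1))) (i : Fin (m - n 0 - 1)),
        maskedOutput n A W b (fun a => X a ⟨i.1, by omega⟩) (K + 1) k =
          ∑ j : Fin (n 0 + 1), lam i j *
            maskedOutput n A W b (fun a => X a ⟨m - (n 0 + 1) + j.1, by omega⟩) (K + 1) k := by
      intro W b k i
      obtain ⟨P, Q, c, hPQ⟩ := exists_factor_of_params n A hℓ₀ hr₀ W b
      have h0 := congrFun (hlam i) 0
      have h1 : (fun a => X a ⟨i.1, by omega⟩) =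
          ∑ j : Fin (n 0 + 1), lam i j • (fun a => X a ⟨m - (n 0 + 1) + j.1, by omega⟩) := by
        ext a
        have := congrFun (hlam i) a.succ
        simpa [Finset.sum_apply] using this
      rw [Finset.sum_apply] at h0
      simp only [Fin.cons_zero, Pi.smul_apply, smul_eq_mul, mul_one] at h0
      simp only [hPQ, Pi.add_apply, mul_add, Finset.sum_add_distrib]
      rw [← Finset.sum_mul, ← h0, one_mul, h1, Matrix.mulVec_sum, Matrix.mulVec_sum,
        Finset.sum_apply]
      simp [Matrix.mulVec_smul]
    set S : Set (MvPolynomial (Fin (n (K + 1)) × Fin m) ℂ) := _ ∪ _ with hS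
    refine le_antisymm (fun f hf => ?_) (Ideal.span_le.2 ?_)
    · let κ : Fin (n 0 + 1) ↪ Fin m :=
        ⟨fun j => ⟨m - (n 0 + 1) + j.1, by omega⟩, fun i j hij => by
          have := congrArg Fin.val hij
          ext; simpa using this⟩
      have hX : LinearIndependent ℝ
          (fun j => (Fin.cons 1 (fun a => X a (κ j)) : Fin (n 0 + 1) → ℝ)) := by
        have h := hgen (Finset.univ.map κ) (by simp; omega)
        exact h.comp (fun j => (⟨κ j, by simp⟩ : (Finset.univ.map κ : Finset (Fin m))))
          fun i j hij => by simpa using hij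
      -- Substitution of the linear relations, eliminating all but the last columns.
      let χ : MvPolynomial (Fin (n (K + 1)) × Fin m) ℂ →ₐ[ℂ]
          MvPolynomial (Fin (n (K + 1)) × Fin (n 0 + 1)) ℂ :=
        MvPolynomial.aeval fun x =>
          if hx : x.2.1 < m - n 0 - 1 then
            ∑ j, MvPolynomial.C (lam ⟨x.2.1, hx⟩ j : ℂ) * MvPolynomial.X (x.1, j)
          else MvPolynomial.X (x.1, ⟨x.2.1 - (m - (n 0 + 1)), by have := x.2.2; omega⟩)
      let ι : MvPolynomial (Fin (n (K + 1)) × Fin (n 0 + 1)) ℂ →ₐ[ℂ]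
          MvPolynomial (Fin (n (K + 1)) × Fin m) ℂ :=
        MvPolynomial.rename fun x => (x.1, κ x.2)
      have hlast : ∀ j : Fin m, ¬ j.1 < m - n 0 - 1 →
          ∀ h' : j.1 - (m - (n 0 + 1)) < n 0 + 1, κ ⟨j.1 - (m - (n 0 + 1)), h'⟩ = j := by
        intro j hj h'
        ext
        change m - (n 0 + 1) + (j.1 - (m - (n 0 + 1))) = j.1
        omega
      have hχ : χ f ∈ Ideal.span (augMinors (n (K + 1)) (n 0 + 1) (r + 2)) := by
        refine mem_span_augMinors fun c P Z => ?_
        obtain ⟨W, b, hWb⟩ := exists_params_of_values n A hK hr₁ hX c P Z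
        have hf0 := hf _ ⟨W, b, rfl⟩
        rw [← hf0]
        simp only [← hWb]
        simp only [χ, MvPolynomial.aeval_def]
        rw [← MvPolynomial.coe_eval₂Hom, ← RingHom.comp_apply]
        congr 1
        refine MvPolynomial.ringHom_ext (by simp) fun x => ?_
        obtain ⟨k, i⟩ := x
        simp only [RingHom.comp_apply, MvPolynomial.coe_eval₂Hom, MvPolynomial.eval₂_X,
          MvPolynomial.eval_X]
        split_ifs with hi
        · rw [hcol W b k ⟨i.1, hi⟩]
          simp [κ]
          rfl
        · rw [MvPolynomial.eval_X]
          simp only [hlast i hi]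
      have hιχ : ι (χ f) ∈ Ideal.span S := by
        have : Ideal.span (augMinors (n (K + 1)) (n 0 + 1) (r + 2)) ≤
            (Ideal.span S).comap ι := by
          refine Ideal.span_le.2 ?_
          rintro _ ⟨ρ, γ, rfl⟩
          refine Ideal.subset_span (Or.inr ⟨ρ, γ, ?_⟩)
          rw [AlgHom.map_det]
          congr 1
          ext1 a b
          simp only [AlgHom.mapMatrix_apply, Matrix.map_apply, Matrix.of_apply]
          generalize ρ a = i
          induction i using Fin.cases with
          | zero => simp
          | succ k =>
            simp [ι, κ]
            rfl
        exact this hχ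
      have hsub : Ideal.Quotient.mk (Ideal.span S) f =
          Ideal.Quotient.mk (Ideal.span S) (ι (χ f)) := by
        have : Ideal.Quotient.mk (Ideal.span S) =
            (Ideal.Quotient.mk (Ideal.span S)).comp (ι.comp χ).toRingHom := by
          refine MvPolynomial.ringHom_ext (fun a => by simp) fun x => ?_
          obtain ⟨k, i⟩ := x
          rw [RingHom.comp_apply, Ideal.Quotient.mk_eq_mk_iff_sub_mem]
          change _ - ι (χ (MvPolynomial.X (k, i))) ∈ _
          simp only [χ, MvPolynomial.aeval_X]
          split_ifs with hi
          · refine Ideal.subset_span (Or.inl ⟨k, ⟨i.1, hi⟩, ?_⟩)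
            simp [ι, κ]
            rfl
          · simp [ι, hlast i hi]
        exact congrArg (fun φ => φ f) this
      rw [← Ideal.Quotient.eq_zero_iff_mem, hsub]
      exact Ideal.Quotient.eq_zero_iff_mem.2 hιχ
    · rintro _ (⟨k, i, rfl⟩ | ⟨ρ, γ, rfl⟩) _ ⟨W, b, rfl⟩
      · simp [hcol W b k i]
      · obtain ⟨P, Q, c, hPQ⟩ := exists_factor_of_params n A hℓ₀ hr₀ W b
        refine eval_augMinor c P (fun t j => (Q.mulVec (fun a => X a j)) t) ρ
          (fun b => ⟨m - (n 0 + 1) + (γ b).1, by have := (γ b).2; omega⟩) _ fun k j => ?_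
        rw [hPQ, Pi.add_apply, add_comm]
        rfl
end
end
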